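/- arXiv:1902.07745 — 10 statements merged into one kernel-verified Lean document; each statement's English description precedes it below -/
import Mathlib

section
/- Let R be a commutative ring and S a commutative R-algebra. Then the following are equivalent: (i) S is flat as an R-module, finitely presented as an R-algebra, and separable, i.e. S is projective as a module over S ⊗_R S, where S is regarded as an (S ⊗_R S)-module via the multiplication map s ⊗ s' ↦ ss'; (ii) S is finitely presented as an R-algebra and S is formally étale over R, i.e. for every commutative R-algebra B and every ideal I of B with I² = 0, every R-algebra homomorphism S → B/I lifts uniquely to an R-algebra homomorphism S → B. -/
open TensorProduct

theorem separable_iff_aux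
    (R S : Type*) [CommRing R] [CommRing S] [Algebra R S] :
    (letI : Algebra (S ⊗[R] S) S := (Algebra.TensorProduct.lmul' R).toRingHom.toAlgebra;
        Module.Projective (S ⊗[R] S) S) ↔
    ∃ t : S ⊗[R] S,
      (∀ s, ((1 : S) ⊗ₜ[R] s - s ⊗ₜ[R] (1 : S)) * t = 0) ∧
        Algebra.TensorProduct.lmul' R t = 1 := by
  letI : Algebra (S ⊗[R] S) S := (Algebra.TensorProduct.lmul' R).toRingHom.toAlgebra
  have hsmul : ∀ (x : S ⊗[R] S) (s : S), x • s = Algebra.TensorProduct.lmul' R x * s :=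
    fun _ _ => rfl
  change Module.Projective (S ⊗[R] S) S ↔ _
  constructor
  · intro h
    let f : (S ⊗[R] S) →ₗ[S ⊗[R] S] S := Algebra.linearMap (S ⊗[R] S) S
    have hf : ∀ x, f x = Algebra.TensorProduct.lmul' R x := fun _ => rfl
    have hsurj : Function.Surjective f := fun s => ⟨s ⊗ₜ 1, by simp [hf]⟩
    obtain ⟨g, hg⟩ := Module.projective_lifting_property f LinearMap.id hsurj
    refine ⟨g 1, fun s => ?_, ?_⟩
    · rw [← smul_eq_mul, ← map_smul, hsmul]
      simp
    · rw [← hf]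
      exact LinearMap.congr_fun hg 1
  · rintro ⟨t, ht, ht1⟩
    have key : ∀ x : S ⊗[R] S, x * t = ((Algebra.TensorProduct.lmul' R x) ⊗ₜ[R] (1 : S)) * t := by
      intro x
      induction x with
      | zero => simp
      | add x y hx hy => rw [add_mul, hx, hy, map_add, TensorProduct.add_tmul, add_mul]
      | tmul a b =>
        have h1 : (1 : S) ⊗ₜ[R] b * t = b ⊗ₜ[R] (1 : S) * t := by
          rw [← sub_eq_zero, ← sub_mul, ht]
        have h2 : a ⊗ₜ[R] b = (a ⊗ₜ[R] (1 : S)) * ((1 : S) ⊗ₜ[R] b) := by simp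
        rw [h2, mul_assoc, h1, ← mul_assoc]
        simp
    let g : S →ₗ[S ⊗[R] S] (S ⊗[R] S) :=
      { toFun := fun s => (s ⊗ₜ[R] (1 : S)) * t
        map_add' := fun a b => by rw [TensorProduct.add_tmul, add_mul]
        map_smul' := fun x s => by
          rw [hsmul, RingHom.id_apply, smul_eq_mul, mul_left_comm, key x, ← mul_assoc,
            Algebra.TensorProduct.tmul_mul_tmul, one_mul, mul_comm s] }
    refine Module.Projective.of_split g (Algebra.linearMap (S ⊗[R] S) S) ?_
    ext s
    change Algebra.TensorProduct.lmul' R ((s ⊗ₜ[R] (1 : S)) * t) = s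
    simp [ht1]

/-- For a commutative ring `R` and a commutative `R`-algebra `S`, the
following are equivalent: (i) `S` is flat, finitely presented and separable (projective as a
module over `S ⊗[R] S` via the multiplication map); (ii) `S` is finitely presented and
formally étale (unique lifting along square-zero ideals). -/
theorem etale_iff_flat_separable_finitePresentation
    (R S : Type u) [CommRing R] [CommRing S] [Algebra R S] :
    (Module.Flat R S ∧ Algebra.FinitePresentation R S ∧
      (letI : Algebra (S ⊗[R] S) S := (Algebra.TensorProduct.lmul' R).toRingHom.toAlgebra;
        Module.Projective (S ⊗[R] S) S)) ↔
    (Algebra.FinitePresentation R S ∧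
      ∀ (B : Type u) [CommRing B] [Algebra R B] (I : Ideal B), I ^ 2 = ⊥ →
        ∀ f : S →ₐ[R] B ⧸ I, ∃! g : S →ₐ[R] B,
          (Ideal.Quotient.mkₐ R I).comp g = f) := by
  rw [separable_iff_aux]
  constructor
  · rintro ⟨hfl, hfp, hsep⟩
    haveI : Algebra.FormallyUnramified R S :=
      Algebra.FormallyUnramified.iff_exists_tensorProduct.mpr hsep
    haveI : Algebra.Etale R S := Algebra.Etale.of_formallyUnramified_of_flat
    refine ⟨hfp, fun B _ _ I hI f => ?_⟩
    exact (Algebra.FormallyEtale.comp_bijective R S I hI).existsUnique f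
  · rintro ⟨hfp, h⟩
    haveI : Algebra.FormallyEtale R S :=
      Algebra.FormallyEtale.iff_comp_bijective.mpr fun B _ _ I hI =>
        (Function.bijective_iff_existsUnique _).mpr (h B I hI)
    haveI : Algebra.Etale R S := ⟨inferInstance, hfp⟩
    exact ⟨inferInstance, hfp, Algebra.FormallyUnramified.iff_exists_tensorProduct.mp inferInstance⟩
end

section
/- Let R be a commutative ring, n a positive integer, and S a commutative R-algebra. Then the following are equivalent: (i) S is an étale R-algebra of degree n, i.e. S is finitely presented and formally étale over R, S is a finite projective R-module, and the rank of S at every prime ideal of R equals n; (ii) there exists a commutative R-algebra T that is finite étale over R (finitely presented, formally étale, and finitely generated as an R-module) and faithfully flat over R, such that T ⊗_R S is isomorphic to the product algebra T^n as a T-algebra. -/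
open TensorProduct

/-- A commutative `R`-algebra `S` is étale of degree `n` (finitely
presented, formally étale, finite projective as an `R`-module, of rank `n` at every prime)
if and only if there is a faithfully flat finite étale `R`-algebra `T` such that
`T ⊗[R] S ≅ T^n` as `T`-algebras. -/
theorem etale_degree_n_iff_split_by_finite_etale_cover
    (R S : Type u) [CommRing R] [CommRing S] [Algebra R S] (n : ℕ) (hn : 0 < n) :
    (Algebra.FinitePresentation R S ∧ Algebra.FormallyEtale R S ∧
      Module.Finite R S ∧ Module.Projective R S ∧
      ∀ p : PrimeSpectrum R, Module.rankAtStalk S p = n) ↔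
    (∃ (T : Type u) (_ : CommRing T) (_ : Algebra R T),
      Algebra.FinitePresentation R T ∧ Algebra.FormallyEtale R T ∧
      Module.Finite R T ∧ Module.FaithfullyFlat R T ∧
      Nonempty ((T ⊗[R] S) ≃ₐ[T] (Fin n → T))) := by
  constructor
  · rintro ⟨h1, h2, h3, h4, h5⟩
    have : Algebra.Etale R S := { }
    obtain ⟨T, _, _, _, _, _, hs⟩ :=
      Algebra.IsFiniteSplit.exists_tensorProduct_of_etale (R := R) (S := S) (n := n)
        (funext fun p ↦ by simpa using h5 p)
    refine ⟨T, inferInstance, inferInstance, inferInstance, inferInstance, inferInstance,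
      inferInstance, ?_⟩
    obtain ⟨m, ⟨e⟩⟩ := hs.nonempty_algEquiv_fun
    cases subsingleton_or_nontrivial T
    · have : Subsingleton (T ⊗[R] S) := e.toEquiv.subsingleton
      exact ⟨default⟩
    · obtain ⟨p⟩ : Nonempty (PrimeSpectrum T) := inferInstance
      have h := congrFun (Module.rankAtStalk_eq_of_equiv e.toLinearEquiv) p
      rw [Module.rankAtStalk_baseChange, h5, Module.rankAtStalk_eq_finrank_of_free] at h
      simp at h
      subst h
      exact ⟨e⟩
  · rintro ⟨T, _, _, h1, h2, h3, h4, ⟨e⟩⟩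
    have : Algebra.Etale T (T ⊗[R] S) := .of_equiv e.symm
    have : Algebra.Etale R S := .of_etale_tensorProduct_of_faithfullyFlat T
    have : Module.Finite T (T ⊗[R] S) := .equiv e.symm.toLinearEquiv
    have : Module.Finite R S := .of_finite_tensorProduct_of_faithfullyFlat T
    have : Module.FinitePresentation R S := .of_finite_of_finitePresentation R S
    have : Module.Projective R S := Module.Flat.projective_of_finitePresentation
    refine ⟨inferInstance, inferInstance, inferInstance, inferInstance, fun p ↦ ?_⟩
    obtain ⟨q, rfl⟩ := PrimeSpectrum.comap_surjective_of_faithfullyFlat (B := T) p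
    have : Nontrivial T := q.nontrivial
    rw [← Module.rankAtStalk_baseChange, Module.rankAtStalk_eq_of_equiv e.toLinearEquiv,
      Module.rankAtStalk_eq_finrank_of_free]
    simp
end

section
/- Let R be a commutative ring and A a commutative R-algebra that is finitely generated as an R-module. Let a_1, …, a_r be elements of A. Then the following are equivalent: (1) a_1, …, a_r generate A as an R-algebra; (2) there exist elements f_1, …, f_m ∈ R generating the unit ideal of R such that, for each i, the images of a_1, …, a_r in the localization A_{f_i} generate A_{f_i} as an R_{f_i}-algebra; (3) for every maximal ideal m of R, the images of a_1, …, a_r in A_m generate A_m as an R_m-algebra; (4) for every maximal ideal m of R with residue field k(m) = R_m/mR_m, the images of a_1, …, a_r in A ⊗_R k(m) generate A ⊗_R k(m) as a k(m)-algebra. -/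
open TensorProduct

theorem aux_baseChange {R A B C : Type*} [CommRing R] [CommRing A] [Algebra R A]
    [CommRing B] [Algebra R B] [CommRing C] [Algebra R C] (φ : B →ₐ[R] C)
    {r : ℕ} (a : Fin r → A)
    (h : Algebra.adjoin B (Set.range fun j => ((1 : B) ⊗ₜ[R] a j : B ⊗[R] A)) = ⊤) :
    Algebra.adjoin C (Set.range fun j => ((1 : C) ⊗ₜ[R] a j : C ⊗[R] A)) = ⊤ := by
  have key : ∀ z : B ⊗[R] A, Algebra.TensorProduct.map φ (AlgHom.id R A) z ∈
      Algebra.adjoin C (Set.range fun j => ((1 : C) ⊗ₜ[R] a j : C ⊗[R] A)) := by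
    intro z
    have hz : z ∈ Algebra.adjoin B
        (Set.range fun j => ((1 : B) ⊗ₜ[R] a j : B ⊗[R] A)) := h ▸ Algebra.mem_top
    induction hz using Algebra.adjoin_induction with
    | mem x hx =>
      obtain ⟨j, rfl⟩ := hx
      apply Algebra.subset_adjoin
      exact ⟨j, by simp⟩
    | algebraMap b =>
      have : Algebra.TensorProduct.map φ (AlgHom.id R A) (algebraMap B (B ⊗[R] A) b) =
          algebraMap C (C ⊗[R] A) (φ b) := by
        simp [Algebra.TensorProduct.algebraMap_apply]
      rw [this]
      exact Subalgebra.algebraMap_mem _ _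
    | add x y _ _ hx hy => rw [map_add]; exact add_mem hx hy
    | mul x y _ _ hx hy => rw [map_mul]; exact mul_mem hx hy
  rw [eq_top_iff]
  rintro z -
  induction z using TensorProduct.induction_on with
  | zero => exact zero_mem _
  | add x y hx hy => exact add_mem hx hy
  | tmul c y =>
    have h1 := key (1 ⊗ₜ y)
    have h2 := Subalgebra.smul_mem _ h1 c
    simpa [TensorProduct.smul_tmul'] using h2

theorem aux_self {R A : Type*} [CommRing R] [CommRing A] [Algebra R A]
    {r : ℕ} (a : Fin r → A) (h : Algebra.adjoin R (Set.range a) = ⊤) :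
    Algebra.adjoin R (Set.range fun j => ((1 : R) ⊗ₜ[R] a j : R ⊗[R] A)) = ⊤ := by
  have := congrArg (Subalgebra.map (Algebra.TensorProduct.lid R A).symm.toAlgHom) h
  rw [AlgHom.map_adjoin, ← Set.range_comp, Algebra.map_top] at this
  have h2 : ((Algebra.TensorProduct.lid R A).symm.toAlgHom).range = ⊤ :=
    (AlgHom.range_eq_top _).2 (Algebra.TensorProduct.lid R A).symm.surjective
  rw [h2] at this
  exact this

theorem aux_quot {R A : Type*} [CommRing R] [CommRing A] [Algebra R A]
    {r : ℕ} (a : Fin r → A) (m : Ideal R)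
    (h : Algebra.adjoin (R ⧸ m)
            (Set.range fun j => ((1 : R ⧸ m) ⊗ₜ[R] a j : (R ⧸ m) ⊗[R] A)) = ⊤) (y : A) :
    ∃ n ∈ Algebra.adjoin R (Set.range a), y - n ∈ m • (⊤ : Submodule R A) := by
  have key : ∀ z : (R ⧸ m) ⊗[R] A, ∃ n ∈ Algebra.adjoin R (Set.range a),
      z = (1 : R ⧸ m) ⊗ₜ[R] n := by
    intro z
    have hz : z ∈ Algebra.adjoin (R ⧸ m)
            (Set.range fun j => ((1 : R ⧸ m) ⊗ₜ[R] a j : (R ⧸ m) ⊗[R] A)) :=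
      h ▸ Algebra.mem_top
    induction hz using Algebra.adjoin_induction with
    | mem x hx =>
      obtain ⟨j, rfl⟩ := hx
      exact ⟨a j, Algebra.subset_adjoin ⟨j, rfl⟩, rfl⟩
    | algebraMap b =>
      obtain ⟨b, rfl⟩ := Ideal.Quotient.mk_surjective b
      refine ⟨algebraMap R A b, Subalgebra.algebraMap_mem _ _, ?_⟩
      rw [Algebra.algebraMap_eq_smul_one (A := A), ← TensorProduct.smul_tmul,
        Algebra.TensorProduct.algebraMap_apply, ← Ideal.Quotient.algebraMap_eq,
        Algebra.smul_def, mul_one]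
      rfl
    | add x y _ _ hx hy =>
      obtain ⟨n, hn, rfl⟩ := hx
      obtain ⟨n', hn', rfl⟩ := hy
      exact ⟨n + n', add_mem hn hn', (TensorProduct.tmul_add _ _ _).symm⟩
    | mul x y _ _ hx hy =>
      obtain ⟨n, hn, rfl⟩ := hx
      obtain ⟨n', hn', rfl⟩ := hy
      exact ⟨n * n', mul_mem hn hn', by simp⟩
  obtain ⟨n, hn, e⟩ := key (1 ⊗ₜ y)
  refine ⟨n, hn, ?_⟩
  have e2 := congrArg (TensorProduct.quotTensorEquivQuotSMul A m) e
  rw [← map_one (Ideal.Quotient.mk m), TensorProduct.quotTensorEquivQuotSMul_mk_tmul,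
    TensorProduct.quotTensorEquivQuotSMul_mk_tmul, one_smul, one_smul] at e2
  exact (Submodule.Quotient.eq _).1 e2

theorem aux_fin {R A : Type*} [CommRing R] [CommRing A] [Algebra R A] [Module.Finite R A]
    (N : Submodule R A)
    (h : ∀ (m : Ideal R) [m.IsMaximal], ∀ y : A, ∃ n ∈ N, y - n ∈ m • (⊤ : Submodule R A)) :
    N = ⊤ := by
  suffices hI : N.colon (⊤ : Submodule R A) = (⊤ : Ideal R) by
    rw [eq_top_iff]
    intro y _
    have : (1 : R) ∈ N.colon (⊤ : Submodule R A) := hI ▸ Submodule.mem_top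
    simpa using Submodule.mem_colon.1 this y trivial
  by_contra hne
  obtain ⟨m, hm, hle⟩ := Ideal.exists_le_maximal _ hne
  have hle2 : (⊤ : Submodule R A) ≤ N ⊔ m • ⊤ := by
    intro y _
    obtain ⟨n, hn, hy⟩ := h m y
    exact Submodule.mem_sup.2 ⟨n, hn, _, hy, by simp⟩
  obtain ⟨s, hs, hs2⟩ := Submodule.exists_sub_one_mem_and_smul_le_of_fg_of_le_sup
    (N := N) (N' := ⊤) (P := ⊤) (I := m) Module.Finite.fg_top le_top hle2
  have hsm : s ∈ m := hle (Submodule.mem_colon.2 fun y _ =>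
    hs2 (Submodule.smul_mem_pointwise_smul y s ⊤ trivial))
  exact hm.ne_top ((Ideal.eq_top_iff_one m).2 (by simpa using m.sub_mem hsm hs))

/-- For a commutative ring `R`, a commutative `R`-algebra `A` that is
finitely generated as an `R`-module, and elements `a 1, …, a r` of `A`, the following are
equivalent: (1) the `aᵢ` generate `A` as an `R`-algebra; (2) there are `f₁, …, f_m ∈ R`
generating the unit ideal such that the images of the `aᵢ` generate each localization
`A_{fᵢ}` over `R_{fᵢ}`; (3) for every maximal ideal `m`, the images of the `aᵢ` generate
`A_m` over `R_m`; (4) for every maximal ideal `m`, the images of the `aᵢ` generate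
`A ⊗_R k(m)` over the residue field `k(m)`. (Localizations and residue-field fibers are
realized as base changes `R_{fᵢ} ⊗[R] A`, `R_m ⊗[R] A` and `(R/m) ⊗[R] A`.) -/
theorem algebra_generation_is_local
    (R A : Type u) [CommRing R] [CommRing A] [Algebra R A] [Module.Finite R A]
    (r : ℕ) (a : Fin r → A) :
    List.TFAE
      [ Algebra.adjoin R (Set.range a) = ⊤,
        ∃ (m : ℕ) (f : Fin m → R), Ideal.span (Set.range f) = ⊤ ∧
          ∀ i, Algebra.adjoin (Localization.Away (f i))
            (Set.range fun j => ((1 : Localization.Away (f i)) ⊗ₜ[R] a j :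
              Localization.Away (f i) ⊗[R] A)) = ⊤,
        ∀ (m : Ideal R) [m.IsMaximal],
          Algebra.adjoin (Localization.AtPrime m)
            (Set.range fun j => ((1 : Localization.AtPrime m) ⊗ₜ[R] a j :
              Localization.AtPrime m ⊗[R] A)) = ⊤,
        ∀ (m : Ideal R) [m.IsMaximal],
          Algebra.adjoin (R ⧸ m)
            (Set.range fun j => ((1 : R ⧸ m) ⊗ₜ[R] a j : (R ⧸ m) ⊗[R] A)) = ⊤ ] := by
  tfae_have 1 → 2 := by
    intro h
    refine ⟨1, fun _ => 1, by simp, fun i => ?_⟩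
    exact aux_baseChange (Algebra.ofId R _) a (aux_self a h)
  tfae_have 1 → 3 := by
    intro h m _
    exact aux_baseChange (Algebra.ofId R _) a (aux_self a h)
  tfae_have 2 → 4 := by
    rintro ⟨k, f, hf, H⟩ m hm
    have : ∃ i, f i ∉ m := by
      by_contra! hc
      apply hm.ne_top
      rw [eq_top_iff, ← hf, Ideal.span_le]
      rintro _ ⟨i, rfl⟩
      exact hc i
    obtain ⟨i, hi⟩ := this
    letI := Ideal.Quotient.field m
    have hu : ∀ y : Submonoid.powers (f i), IsUnit (Algebra.ofId R (R ⧸ m) y) := by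
      rintro ⟨_, n, rfl⟩
      simp only [map_pow]
      apply IsUnit.pow
      rw [isUnit_iff_ne_zero]
      exact fun h0 => hi (Ideal.Quotient.eq_zero_iff_mem.1 h0)
    exact aux_baseChange (IsLocalization.liftAlgHom (S := Localization.Away (f i)) hu) a (H i)
  tfae_have 3 → 4 := by
    intro H m hm
    letI := Ideal.Quotient.field m
    have hu : ∀ y : m.primeCompl, IsUnit (Algebra.ofId R (R ⧸ m) y) := by
      rintro ⟨y, hy⟩
      rw [isUnit_iff_ne_zero]
      exact fun h0 => hy (Ideal.Quotient.eq_zero_iff_mem.1 h0)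
    exact aux_baseChange (IsLocalization.liftAlgHom (S := Localization.AtPrime m) hu) a (H m)
  tfae_have 4 → 1 := by
    intro H
    rw [← Algebra.toSubmodule_eq_top]
    exact aux_fin _ fun m _ y => aux_quot a m (H m) y
  tfae_finish
end

section
/- Let R be a commutative local ring, let n ≥ 2 and r ≥ 1, and let a_1, …, a_r be elements of R^n, writing a_{ki} for the i-th component of a_k. Then the following are equivalent: (i) the set {a_1, …, a_r} generates R^n as an R-algebra; (ii) for every pair of indices (i, j) with 1 ≤ i < j ≤ n, there exists k ∈ {1, …, r} such that a_{ki} − a_{kj} is a unit of R. -/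
/-- Over a commutative local ring `R`, with `n ≥ 2` and `r ≥ 1`, a tuple
`a 1, …, a r ∈ Rⁿ` generates the product algebra `Rⁿ` as an `R`-algebra if and only if for
every pair of indices `i < j` there is some `k` with `a k i − a k j` a unit of `R`. -/
theorem generation_of_trivial_algebra_over_local_ring
    (R : Type u) [CommRing R] [IsLocalRing R] (n r : ℕ) (hn : 2 ≤ n) (hr : 1 ≤ r)
    (a : Fin r → (Fin n → R)) :
    Algebra.adjoin R (Set.range a) = (⊤ : Subalgebra R (Fin n → R)) ↔
      ∀ i j : Fin n, i < j → ∃ k : Fin r, IsUnit (a k i - a k j) := by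
  constructor
  · intro h i j hij
    by_contra hc
    push Not at hc
    have key : ∀ x ∈ Algebra.adjoin R (Set.range a),
        x i - x j ∈ IsLocalRing.maximalIdeal R := by
      intro x hx
      induction hx using Algebra.adjoin_induction with
      | mem x hx =>
        obtain ⟨k, rfl⟩ := hx
        exact (IsLocalRing.mem_maximalIdeal _).2 (hc k)
      | algebraMap c => simp
      | add x y _ _ hx hy =>
        have e : (x + y) i - (x + y) j = (x i - x j) + (y i - y j) := by
          simp only [Pi.add_apply]; ring
        rw [e]; exact Ideal.add_mem _ hx hy
      | mul x y _ _ hx hy =>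
        have e : (x * y) i - (x * y) j = y i * (x i - x j) + x j * (y i - y j) := by
          simp only [Pi.mul_apply]; ring
        rw [e]
        exact Ideal.add_mem _ (Ideal.mul_mem_left _ _ hx) (Ideal.mul_mem_left _ _ hy)
    have h1 := key (Pi.single i 1) (by rw [h]; trivial)
    rw [Pi.single_eq_same, Pi.single_eq_of_ne hij.ne', sub_zero] at h1
    exact (IsLocalRing.mem_maximalIdeal _).1 h1 isUnit_one
  · intro h
    have h1 : ∀ i j : Fin n, i ≠ j → ∃ k : Fin r, IsUnit (a k i - a k j) := by
      intro i j hij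
      rcases lt_or_gt_of_ne hij with hl | hl
      · exact h i j hl
      · obtain ⟨k, hk⟩ := h j i hl
        exact ⟨k, by rw [← neg_sub]; exact hk.neg⟩
    have h2 : ∀ i j : Fin n, ∃ e ∈ Algebra.adjoin R (Set.range a),
        e i = 1 ∧ (i ≠ j → e j = 0) := by
      intro i j
      by_cases hij : i = j
      · exact ⟨1, one_mem _, rfl, fun hne => absurd hij hne⟩
      · obtain ⟨k, hk⟩ := h1 i j hij
        obtain ⟨c, hc⟩ := hk.exists_left_inv
        refine ⟨c • (a k - algebraMap R (Fin n → R) (a k j)), ?_, ?_, ?_⟩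
        · exact Subalgebra.smul_mem _ (sub_mem (Algebra.subset_adjoin (Set.mem_range_self k))
            (Subalgebra.algebraMap_mem _ _)) _
        · simpa using hc
        · intro _; simp
    choose e he he1 he0 using h2
    have h3 : ∀ i, (Pi.single i 1 : Fin n → R) ∈ Algebra.adjoin R (Set.range a) := by
      intro i
      have : (Pi.single i 1 : Fin n → R) = ∏ j, e i j := by
        ext l
        rw [Finset.prod_apply]
        by_cases hl : i = l
        · subst hl
          simp [he1]
        · rw [Pi.single_eq_of_ne (Ne.symm hl)]
          exact (Finset.prod_eq_zero (f := fun c => e i c l) (Finset.mem_univ l) (he0 i l hl)).symm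
      rw [this]
      exact prod_mem fun j _ => he i j
    rw [eq_top_iff]
    intro x _
    have : x = ∑ i, x i • (Pi.single i 1 : Fin n → R) := by
      ext l
      simp [Finset.sum_apply, Pi.single_apply]
    rw [this]
    exact sum_mem fun i _ => Subalgebra.smul_mem _ (h3 i) _
end

section
/- Let R be a commutative ring, let n ≥ 2 and r ≥ 1, and let a_1, …, a_r be elements of R^n, writing a_{ki} for the i-th component of a_k. Then the set {a_1, …, a_r} generates R^n as an R-algebra if and only if, for every pair of indices i ≠ j in {1, …, n}, the ideal of R generated by the r elements a_{1i} − a_{1j}, a_{2i} − a_{2j}, …, a_{ri} − a_{rj} is the unit ideal. -/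
/-- Over a commutative ring `R`, with `n ≥ 2` and `r ≥ 1`, a tuple
`a 1, …, a r ∈ Rⁿ` generates the product algebra `Rⁿ` as an `R`-algebra if and only if for
every pair of distinct indices `i ≠ j`, the ideal of `R` generated by the `r` elements
`a k i − a k j` (for `k = 1, …, r`) is the unit ideal. -/
theorem generation_of_trivial_algebra
    (R : Type u) [CommRing R] (n r : ℕ) (hn : 2 ≤ n) (hr : 1 ≤ r)
    (a : Fin r → (Fin n → R)) :
    Algebra.adjoin R (Set.range a) = (⊤ : Subalgebra R (Fin n → R)) ↔
      ∀ i j : Fin n, i ≠ j →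
        Ideal.span (Set.range fun k : Fin r => a k i - a k j) = (⊤ : Ideal R) := by
  constructor
  · intro h i j hij
    rw [Ideal.eq_top_iff_one]
    have key : ∀ x ∈ Algebra.adjoin R (Set.range a),
        x i - x j ∈ Ideal.span (Set.range fun k : Fin r => a k i - a k j) := by
      intro x hx
      induction hx using Algebra.adjoin_induction with
      | mem x hx =>
        obtain ⟨k, rfl⟩ := hx
        exact Ideal.subset_span ⟨k, rfl⟩
      | algebraMap c => simp
      | add x y _ _ hx hy =>
        have e : (x + y) i - (x + y) j = (x i - x j) + (y i - y j) := by
          simp only [Pi.add_apply]; ring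
        rw [e]
        exact Ideal.add_mem _ hx hy
      | mul x y _ _ hx hy =>
        have e : (x * y) i - (x * y) j = y i * (x i - x j) + x j * (y i - y j) := by
          simp only [Pi.mul_apply]; ring
        rw [e]
        exact Ideal.add_mem _ (Ideal.mul_mem_left _ _ hx) (Ideal.mul_mem_left _ _ hy)
    have h1 := key (Pi.single i 1) (by rw [h]; exact Algebra.mem_top)
    simpa [Pi.single_eq_of_ne hij.symm] using h1
  · intro h
    have h1 : ∀ i j : Fin n, i ≠ j →
        ∃ e ∈ Algebra.adjoin R (Set.range a), e i = 1 ∧ e j = 0 := by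
      intro i j hij
      have h2 : (1 : R) ∈ Ideal.span (Set.range fun k : Fin r => a k i - a k j) := by
        rw [h i j hij]; trivial
      obtain ⟨c, hc⟩ := (Ideal.mem_span_range_iff_exists_fun).1 h2
      refine ⟨∑ k, c k • (a k - algebraMap R (Fin n → R) (a k j)), ?_, ?_, ?_⟩
      · refine Subalgebra.sum_mem _ fun k _ => Subalgebra.smul_mem _ ?_ _
        exact Subalgebra.sub_mem _ (Algebra.subset_adjoin ⟨k, rfl⟩) (Subalgebra.algebraMap_mem _ _)
      · simpa [Finset.sum_apply] using hc
      · simp [Finset.sum_apply]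
    choose! e he he1 he0 using h1
    have h3 : ∀ i : Fin n, (Pi.single i 1 : Fin n → R) ∈ Algebra.adjoin R (Set.range a) := by
      intro i
      have e2 : (Pi.single i 1 : Fin n → R) = ∏ j ∈ Finset.univ.erase i, e i j := by
        funext l
        rw [Finset.prod_apply]
        by_cases hl : l = i
        · subst hl
          rw [Pi.single_eq_same]
          exact (Finset.prod_eq_one fun j hj => he1 l j (Finset.ne_of_mem_erase hj).symm).symm
        · rw [Pi.single_eq_of_ne hl]
          exact (Finset.prod_eq_zero (f := fun c => e i c l) (Finset.mem_erase.2 ⟨hl, Finset.mem_univ l⟩)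
            (he0 i l (Ne.symm hl))).symm
      rw [e2]
      exact Subalgebra.prod_mem _ fun j hj => he i j (Finset.ne_of_mem_erase hj).symm
    rw [eq_top_iff]
    intro x _
    rw [pi_eq_sum_univ' x]
    refine Subalgebra.sum_mem _ fun i _ => Subalgebra.smul_mem _ ?_ _
    convert h3 i using 1
end

section
/- Let n ≥ 1 and let R be a nonzero commutative ring whose only idempotent elements are 0 and 1. Then for every R-algebra automorphism φ of the product R-algebra R^n there exists a unique permutation σ of {1, …, n} such that φ(x_1, …, x_n) = (x_{σ(1)}, …, x_{σ(n)}) for all (x_1, …, x_n) ∈ R^n; consequently the group of R-algebra automorphisms of R^n is isomorphic to the symmetric group S_n. -/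
theorem aux_exists_index {R : Type*} [CommRing R] [Nontrivial R]
    (hconn : ∀ e : R, e * e = e → e = 0 ∨ e = 1) {n : ℕ}
    (φ : (Fin n → R) ≃ₐ[R] (Fin n → R)) (i : Fin n) :
    ∃ j : Fin n, ∀ x : Fin n → R, φ x i = x j := by
  have hsum : ∑ j, φ (Pi.single j 1) i = 1 := by
    rw [← Finset.sum_apply, ← map_sum]
    have h : ∑ j, (Pi.single j (1 : R) : Fin n → R) = 1 :=
      Finset.univ_sum_single (1 : Fin n → R)
    rw [h, map_one, Pi.one_apply]
  have hne : ∃ j, φ (Pi.single j 1) i ≠ 0 := by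
    by_contra hcon
    push Not at hcon
    simp [hcon] at hsum
  obtain ⟨j, hj⟩ := hne
  have hid : φ (Pi.single j 1) i * φ (Pi.single j 1) i = φ (Pi.single j 1) i := by
    rw [← Pi.mul_apply, ← map_mul, ← Pi.single_mul, one_mul]
  have h1 := (hconn _ hid).resolve_left hj
  refine ⟨j, fun x => ?_⟩
  have hx : x * Pi.single j 1 = x j • (Pi.single j 1 : Fin n → R) := by
    ext k
    by_cases hk : k = j
    · subst hk; simp
    · simp [hk]
  have h2 := congrFun (congrArg φ hx) i
  rw [map_mul, map_smul, Pi.mul_apply, Pi.smul_apply, h1] at h2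
  simpa using h2

theorem aux_eq {R : Type*} [CommRing R] [Nontrivial R] {n : ℕ} {a b : Fin n}
    (h : ∀ x : Fin n → R, x a = x b) : a = b := by
  by_contra hab
  have h1 := h (Pi.single a 1)
  rw [Pi.single_eq_same, Pi.single_eq_of_ne (Ne.symm hab)] at h1
  exact one_ne_zero h1

/-- The action of permutations on the product algebra. -/
def auxHom (R : Type*) [CommRing R] (n : ℕ) :
    Equiv.Perm (Fin n) →* ((Fin n → R) ≃ₐ[R] (Fin n → R)) where
  toFun σ :=
    { toFun := fun x i => x (σ⁻¹ i)
      invFun := fun x i => x (σ i)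
      left_inv := fun x => by ext i; simp
      right_inv := fun x => by ext i; simp
      map_mul' := fun x y => rfl
      map_add' := fun x y => rfl
      commutes' := fun r => rfl }
  map_one' := rfl
  map_mul' σ τ := by
    ext x i
    change x ((σ * τ)⁻¹ i) = x (τ⁻¹ (σ⁻¹ i))
    rw [mul_inv_rev, Equiv.Perm.mul_apply]

/-- If `R` is a nonzero commutative ring whose only idempotents are `0`
and `1` (a connected ring), then every `R`-algebra automorphism of the product algebra
`Rⁿ` is given by permuting the coordinates, by a unique permutation; consequently the
automorphism group of `Rⁿ` is isomorphic to the symmetric group `Sₙ`. -/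
theorem aut_of_trivial_algebra_is_symmetric_group
    (R : Type u) [CommRing R] [Nontrivial R]
    (hconn : ∀ e : R, e * e = e → e = 0 ∨ e = 1) (n : ℕ) (hn : 1 ≤ n) :
    (∀ φ : (Fin n → R) ≃ₐ[R] (Fin n → R),
      ∃! σ : Equiv.Perm (Fin n), ∀ (x : Fin n → R) (i : Fin n), φ x i = x (σ i)) ∧
    Nonempty (((Fin n → R) ≃ₐ[R] (Fin n → R)) ≃* Equiv.Perm (Fin n)) := by
  have key : ∀ φ : (Fin n → R) ≃ₐ[R] (Fin n → R),
      ∃ σ : Equiv.Perm (Fin n), ∀ (x : Fin n → R) (i : Fin n), φ x i = x (σ i) := by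
    intro φ
    choose f hf using aux_exists_index hconn φ
    choose g hg using aux_exists_index hconn φ.symm
    refine ⟨⟨f, g, fun i => ?_, fun i => ?_⟩, fun x i => hf i x⟩
    · refine aux_eq (R := R) fun x => ?_
      change x (g (f i)) = x i
      rw [← hg (f i) x, ← hf i (φ.symm x), AlgEquiv.apply_symm_apply]
    · refine aux_eq (R := R) fun x => ?_
      change x (f (g i)) = x i
      rw [← hf (g i) x, ← hg i (φ x), AlgEquiv.symm_apply_apply]
  refine ⟨fun φ => ?_, ⟨(MulEquiv.ofBijective (auxHom R n) ⟨?_, ?_⟩).symm⟩⟩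
  · obtain ⟨σ, hσ⟩ := key φ
    refine ⟨σ, hσ, fun τ hτ => Equiv.ext fun i => aux_eq (R := R) fun x => ?_⟩
    rw [← hτ x i, ← hσ x i]
  · intro σ τ h
    apply inv_injective
    refine Equiv.ext fun i => aux_eq (R := R) fun x => ?_
    exact congrFun (DFunLike.congr_fun h x) i
  · intro φ
    obtain ⟨σ, hσ⟩ := key φ
    refine ⟨σ⁻¹, ?_⟩
    ext x i
    rw [hσ]
    change x (σ⁻¹⁻¹ i) = x (σ i)
    rw [inv_inv]
end

section
/- Let k be a field and r ≥ 1. In the polynomial ring S = k[a_1, …, a_r, b_1, …, b_r], let Q = a_1b_1 + ⋯ + a_rb_r. If p ∈ S is a polynomial such that the product (Q − 1)·p is homogeneous with respect to the standard grading (in which each variable a_i and b_i has degree 1), then p = 0. In other words, the only homogeneous element of the ideal generated by Q − 1 is 0. -/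
open MvPolynomial

/-- Let `k` be a field, `r ≥ 1`, and in `S = k[a₁,…,a_r,b₁,…,b_r]` (the
`a`s indexed by `Sum.inl`, the `b`s by `Sum.inr`) let `Q = a₁b₁ + ⋯ + a_rb_r`. If
`(Q − 1)·p` is homogeneous for the standard grading, then `p = 0`; that is, the only
homogeneous element of the ideal `(Q − 1)` is `0`. -/
theorem no_nonzero_homogeneous_multiple_of_Q_sub_one
    (k : Type u) [Field k] (r : ℕ) (hr : 1 ≤ r)
    (p : MvPolynomial (Fin r ⊕ Fin r) k)
    (hp : ∃ d : ℕ,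
      (((∑ i : Fin r, X (Sum.inl i) * X (Sum.inr i)) - 1) * p).IsHomogeneous d) :
    p = 0 := by
  classical
  obtain ⟨d, hd⟩ := hp
  by_contra hp0
  have hQ : (∑ i : Fin r, X (Sum.inl i) * X (Sum.inr i) :
      MvPolynomial (Fin r ⊕ Fin r) k).IsHomogeneous 2 :=
    IsHomogeneous.sum _ _ _ fun i _ => (isHomogeneous_X k _).mul (isHomogeneous_X k _)
  have hpos : (∑ i : Fin r, X (Sum.inl i) * X (Sum.inr i) - 1 :
      MvPolynomial (Fin r ⊕ Fin r) k).totalDegree ≠ 0 := by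
    intro h
    rw [totalDegree_eq_zero_iff_eq_C] at h
    have h0 := congrArg (eval (fun _ => (0 : k))) h
    have h1 := congrArg (eval (Sum.elim (fun i => if i = (⟨0, hr⟩ : Fin r) then (1 : k) else 0)
      (fun _ => 1))) h
    simp only [map_sub, map_sum, map_mul, eval_X, map_one, eval_C, Sum.elim_inl, Sum.elim_inr,
      mul_one, mul_zero, Finset.sum_const_zero, Finset.sum_ite_eq', Finset.mem_univ, if_true] at h0 h1
    rw [← h0] at h1
    simp at h1
  generalize (∑ i : Fin r, X (Sum.inl i) * X (Sum.inr i) :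
      MvPolynomial (Fin r ⊕ Fin r) k) = Q at *
  have hne : Q - 1 ≠ 0 := by
    intro h
    simp [h] at hpos
  have hdeg := hd.totalDegree (mul_ne_zero hne hp0)
  rw [totalDegree_mul_of_isDomain hne hp0] at hdeg
  have key : ∀ n : ℕ, n < d → ∀ e : (Fin r ⊕ Fin r) →₀ ℕ, e.degree = n → coeff e p = 0 := by
    intro n
    induction n using Nat.strong_induction_on with
    | _ n ih =>
      intro hn e he
      have h1 := hd.coeff_eq_zero (d := e) (by omega)
      have h2 : coeff e (Q * p) = 0 := by
        rw [coeff_mul]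
        refine Finset.sum_eq_zero fun x hx => ?_
        rw [Finset.HasAntidiagonal.mem_antidiagonal] at hx
        by_cases hx2 : x.1.degree = 2
        · have : x.1.degree + x.2.degree = n := by
            rw [← he, ← hx, map_add]
          rw [ih x.2.degree (by omega) (by omega) x.2 rfl, mul_zero]
        · rw [hQ.coeff_eq_zero hx2, zero_mul]
      rw [sub_mul, one_mul, coeff_sub, h2] at h1
      simpa using h1
  apply hp0
  ext e
  rw [coeff_zero]
  by_contra hc
  have hle := le_totalDegree (mem_support_iff.mpr hc)
  have : e.degree ≤ p.totalDegree := hle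
  exact hc (key _ (by omega) e rfl)
end

section
/- Let r ≥ 1, let S = ℝ[z_1, …, z_r]/(z_1² + ⋯ + z_r² − 1), let σ be the ℝ-algebra automorphism of S determined by σ(z_i) = −z_i for all i, and let R = S^σ be the fixed subring. Then S cannot be generated as an R-algebra by fewer than r elements: for any elements s_1, …, s_{r−1} ∈ S, the smallest R-subalgebra of S containing s_1, …, s_{r−1} is a proper subalgebra of S. -/
open MvPolynomial

/-- The ideal `(z₁² + ⋯ + z_r² − 1)` in `ℝ[z₁,…,z_r]`. -/
noncomputable abbrev sphereIdeal (r : ℕ) : Ideal (MvPolynomial (Fin r) ℝ) :=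
  Ideal.span {(∑ i : Fin r, X i ^ 2) - 1}

/-- The coordinate ring `S = ℝ[z₁,…,z_r]/(Σ zᵢ² − 1)` of the real `(r−1)`-sphere. -/
noncomputable abbrev Sring (r : ℕ) :=
  MvPolynomial (Fin r) ℝ ⧸ sphereIdeal r

/-- The class of `z_i` in `S`. -/
noncomputable abbrev Sz (r : ℕ) (i : Fin r) : Sring r :=
  Ideal.Quotient.mk (sphereIdeal r) (X i)

theorem chx_odd_root (p : Polynomial ℝ) (hm : p.Monic) (ho : Odd p.natDegree) :
    ∃ x, p.IsRoot x := by
  have hd : 0 < p.degree := Polynomial.natDegree_pos_iff_degree_pos.1 ho.pos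
  have h1 : Filter.Tendsto (fun x => p.eval x) Filter.atTop Filter.atTop :=
    Polynomial.tendsto_atTop_of_leadingCoeff_nonneg p hd (by rw [hm.leadingCoeff]; norm_num)
  have h2 : Filter.Tendsto (fun x => (p.comp (-Polynomial.X)).eval x) Filter.atTop Filter.atBot := by
    apply Polynomial.tendsto_atBot_of_leadingCoeff_nonpos
    · rw [← Polynomial.natDegree_pos_iff_degree_pos, Polynomial.natDegree_comp]
      simpa using ho.pos
    · rw [Polynomial.leadingCoeff_comp (by simp)]
      simp [hm.leadingCoeff, ho.neg_one_pow]
  obtain ⟨a, ha⟩ := (h1.eventually (Filter.eventually_ge_atTop 0)).exists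
  obtain ⟨b, hb⟩ := (h2.eventually (Filter.eventually_le_atBot 0)).exists
  simp only [Polynomial.eval_comp, Polynomial.eval_neg, Polynomial.eval_X] at hb
  have := mem_range_of_exists_le_of_exists_ge p.continuous ⟨_, hb⟩ ⟨_, ha⟩
  exact this

theorem chx_eig {C : Type*} [CommRing C] [Algebra ℝ C] (k : ℕ) :
    ∀ (V : Type) [AddCommGroup V] [Module ℝ V] [Module C V] [IsScalarTower ℝ C V]
      [FiniteDimensional ℝ V], Module.finrank ℝ V = k → Odd k → Nonempty (C →ₐ[ℝ] ℝ) := by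
  induction k using Nat.strong_induction_on with
  | _ k ih =>
    intro V _ _ _ _ _ hk ho
    have hnt : Nontrivial V := Module.nontrivial_of_finrank_pos (R := ℝ) (by rw [hk]; exact ho.pos)
    by_cases hs : ∀ c : C, ∃ a : ℝ, ∀ v : V, c • v = a • v
    · choose χ hχ using hs
      obtain ⟨v, hv⟩ := exists_ne (0 : V)
      have key : ∀ a b : ℝ, a • v = b • v → a = b := fun a b h => smul_left_injective ℝ hv h
      refine ⟨AlgHom.ofLinearMap
        { toFun := χ
          map_add' := fun x y => key _ _ ?_
          map_smul' := fun x y => key _ _ ?_ } (key _ _ ?_) (fun x y => key _ _ ?_)⟩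
      · rw [← hχ, add_smul, add_smul, hχ, hχ]
      · rw [← hχ, smul_assoc, hχ]; simp [mul_smul]
      · show χ 1 • v = _
        rw [← hχ]; simp
      · show χ (x * y) • v = (χ x * χ y) • v
        rw [← hχ, mul_smul, mul_smul, hχ y, hχ x]
    · push Not at hs
      obtain ⟨c, hc⟩ := hs
      let T : V →ₗ[ℝ] V := Algebra.lsmul ℝ ℝ V c
      obtain ⟨a, ha⟩ := chx_odd_root T.charpoly (LinearMap.charpoly_monic T)
        (by rw [LinearMap.charpoly_natDegree, hk]; exact ho)
      have hev : Module.End.HasEigenvalue T a :=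
        (Module.End.hasEigenvalue_iff_isRoot_charpoly T a).2 ha
      obtain ⟨w, hw⟩ := hev.exists_hasEigenvector
      let F : V →ₗ[C] V := LinearMap.lsmul C V (c - algebraMap ℝ C a)
      have hF : ∀ v, F v = c • v - a • v := fun v => by
        simp [F]
      have hsum := LinearMap.finrank_range_add_finrank_ker (F.restrictScalars ℝ)
      have e1 : Module.finrank ℝ (LinearMap.range (F.restrictScalars ℝ)) =
        Module.finrank ℝ (LinearMap.range F) := rfl
      have e2 : Module.finrank ℝ (LinearMap.ker (F.restrictScalars ℝ)) =
        Module.finrank ℝ (LinearMap.ker F) := rfl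
      have p1 : 0 < Module.finrank ℝ (LinearMap.range (F.restrictScalars ℝ)) := by
        obtain ⟨v, hv⟩ := hc a
        rw [Module.finrank_pos_iff]
        refine ⟨⟨F v, ⟨v, rfl⟩⟩, 0, fun h => hv ?_⟩
        have := congrArg Subtype.val h
        simp only [hF] at this
        exact sub_eq_zero.1 this
      have p2 : 0 < Module.finrank ℝ (LinearMap.ker (F.restrictScalars ℝ)) := by
        rw [Module.finrank_pos_iff]
        refine ⟨⟨w, ?_⟩, 0, fun h => hw.2 (congrArg Subtype.val h)⟩
        have := hw.apply_eq_smul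
        show F w = 0
        rw [hF, sub_eq_zero]; exact this
      rw [e1] at p1 hsum
      rw [e2] at p2 hsum
      rw [hk] at hsum
      have : FiniteDimensional ℝ (LinearMap.range F) :=
        inferInstanceAs (FiniteDimensional ℝ (LinearMap.range (F.restrictScalars ℝ)))
      have : FiniteDimensional ℝ (LinearMap.ker F) :=
        inferInstanceAs (FiniteDimensional ℝ (LinearMap.ker (F.restrictScalars ℝ)))
      rcases Nat.even_or_odd (Module.finrank ℝ (LinearMap.range F)) with h | h
      · have h' : Odd (Module.finrank ℝ (LinearMap.ker F)) := by
          rw [← hsum] at ho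
          exact (Nat.odd_add'.1 ho).2 h
        exact ih _ (by omega) (LinearMap.ker F) rfl h'
      · exact ih _ (by omega) (LinearMap.range F) rfl h

section chx
variable {O : Type} [CommRing O] {n : ℕ}

/-- the perturbed system -/
noncomputable def chxG (d : ℕ) (t : O) (f : Fin n → MvPolynomial (Fin n) O) (i : Fin n) :
    MvPolynomial (Fin n) O := X i ^ d + C t * f i

/-- ideal of a partial system -/
noncomputable def chxJ (d : ℕ) (t : O) (f : Fin n → MvPolynomial (Fin n) O) (s : Finset (Fin n)) :
    Ideal (MvPolynomial (Fin n) O) := Ideal.span (chxG d t f '' s)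

/-- membership modulo `t` in coefficients -/
def chxQ (d : ℕ) (t : O) (s : Finset (Fin n)) (p : MvPolynomial (Fin n) O) : Prop :=
  ∀ m : Fin n →₀ ℕ, (∀ i ∈ s, m i < d) → t ∣ coeff m p

theorem chxQ_mul {d : ℕ} {t : O} {s : Finset (Fin n)} {p : MvPolynomial (Fin n) O}
    (q : MvPolynomial (Fin n) O) (h : chxQ d t s p) : chxQ d t s (q * p) := by
  intro m hm
  rw [coeff_mul]
  refine Finset.dvd_sum fun x hx => Dvd.dvd.mul_left (h _ fun i hi => ?_) _
  rw [Finset.HasAntidiagonal.mem_antidiagonal] at hx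
  have := hm i hi
  rw [← hx, Finsupp.add_apply] at this
  omega

theorem chxQ_add {d : ℕ} {t : O} {s : Finset (Fin n)} {p q : MvPolynomial (Fin n) O}
    (h : chxQ d t s p) (h' : chxQ d t s q) : chxQ d t s (p + q) := by
  intro m hm
  rw [coeff_add]
  exact dvd_add (h m hm) (h' m hm)

theorem chxQ_Ct {d : ℕ} {t : O} {s : Finset (Fin n)} (p : MvPolynomial (Fin n) O) :
    chxQ d t s (C t * p) := by
  intro m hm
  rw [coeff_C_mul]
  exact dvd_mul_right _ _

theorem chxQ_X {d : ℕ} {t : O} {s : Finset (Fin n)} {i : Fin n} (hi : i ∈ s) :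
    chxQ d t s (X i ^ d) := by
  intro m hm
  rw [coeff_X_pow, if_neg]
  · simp
  · rintro rfl
    have := hm i hi
    simp at this

theorem chxQ_of_mem {d : ℕ} {t : O} {f : Fin n → MvPolynomial (Fin n) O} {s : Finset (Fin n)}
    {p : MvPolynomial (Fin n) O} (h : p ∈ chxJ d t f s) : chxQ d t s p := by
  refine Submodule.span_induction ?_ ?_ ?_ ?_ h
  · rintro _ ⟨i, hi, rfl⟩
    exact chxQ_add (chxQ_X (by simpa using hi)) (chxQ_Ct _)
  · intro m hm; simp
  · intro x y _ _; exact chxQ_add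
  · intro a x _ hx; exact chxQ_mul a hx

theorem chxG_mem {d : ℕ} {t : O} {f : Fin n → MvPolynomial (Fin n) O} {s : Finset (Fin n)}
    {i : Fin n} (hi : i ∈ s) : chxG d t f i ∈ chxJ d t f s :=
  Ideal.subset_span ⟨i, by simpa using hi, rfl⟩

theorem chx_monomial_split {d : ℕ} {m : Fin n →₀ ℕ} {i : Fin n} (hi : d ≤ m i) (c : O) :
    ∃ m' : Fin n →₀ ℕ, m = m' + Finsupp.single i d ∧
      monomial m c = monomial m' c * X i ^ d := by
  refine ⟨m - Finsupp.single i d, ?_, ?_⟩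
  · exact (tsub_add_cancel_of_le (by simpa using hi)).symm
  · rw [X_pow_eq_monomial, monomial_mul, mul_one, tsub_add_cancel_of_le (by simpa using hi)]

theorem chx_mem_of_Q {d : ℕ} {t : O} (f : Fin n → MvPolynomial (Fin n) O) {s : Finset (Fin n)}
    {p : MvPolynomial (Fin n) O} (h : chxQ d t s p) :
    ∃ w ∈ chxJ d t f s, ∃ h, p = w + C t * h := by
  have key : p ∈ chxJ d t f s ⊔ Ideal.span {C t} := by
    rw [p.as_sum]
    refine sum_mem fun m _ => ?_
    by_cases hm : ∀ i ∈ s, m i < d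
    · obtain ⟨c, hc⟩ := h m hm
      refine Ideal.mem_sup_right (Ideal.mem_span_singleton.2 ⟨monomial m c, ?_⟩)
      rw [hc, C_mul_monomial]
    · push Not at hm
      obtain ⟨i, hi, hd⟩ := hm
      obtain ⟨m', -, e⟩ := chx_monomial_split hd (coeff m p)
      rw [e]
      have : monomial m' (coeff m p) * X i ^ d =
        monomial m' (coeff m p) * chxG d t f i + C t * (- f i * monomial m' (coeff m p)) := by
        simp only [chxG]; ring
      rw [this]
      exact Submodule.add_mem_sup (Ideal.mul_mem_left _ _ (chxG_mem hi))
        (Ideal.mem_span_singleton.2 ⟨_, rfl⟩)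
  obtain ⟨w, hw, z, hz, e⟩ := Submodule.mem_sup.1 key
  obtain ⟨y, rfl⟩ := Ideal.mem_span_singleton.1 hz
  exact ⟨w, hw, y, e.symm⟩

theorem chxQ_colon {d : ℕ} {t : O} {f : Fin n → MvPolynomial (Fin n) O} {s : Finset (Fin n)}
    {i : Fin n} (hi : i ∉ s) {h : MvPolynomial (Fin n) O} (H : chxQ d t s (h * chxG d t f i)) :
    chxQ d t s h := by
  have H2 : chxQ d t s (h * X i ^ d) := by
    have : h * X i ^ d = h * chxG d t f i + C t * (- f i * h) := by
      simp only [chxG]; ring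
    rw [this]
    exact chxQ_add H (chxQ_Ct _)
  intro m hm
  have := H2 (m + Finsupp.single i d) (fun j hj => by
    have hij : i ≠ j := fun e => hi (e ▸ hj)
    simpa [Finsupp.single_apply, hij] using hm j hj)
  rwa [X_pow_eq_monomial, coeff_mul_monomial, mul_one] at this

theorem chx_sat [IsDomain O] {d : ℕ} {t : O} (ht : t ≠ 0) (f : Fin n → MvPolynomial (Fin n) O)
    (s : Finset (Fin n)) : ∀ u, C t * u ∈ chxJ d t f s → u ∈ chxJ d t f s := by
  classical
  induction s using Finset.induction_on with
  | empty =>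
    intro u hu
    simp only [chxJ, Finset.coe_empty, Set.image_empty, Ideal.span_empty, Ideal.mem_bot] at hu ⊢
    rcases mul_eq_zero.1 hu with h | h
    · exact absurd ((C_eq_zero).1 h) ht
    · exact h
  | insert i s hi ih =>
    have hins : chxJ d t f (insert i s) = Ideal.span {chxG d t f i} ⊔ chxJ d t f s := by
      simp only [chxJ, Finset.coe_insert, Set.image_insert_eq, Ideal.span_insert]
    intro u hu
    rw [hins] at hu ⊢
    obtain ⟨z, hz, v, hv, e⟩ := Submodule.mem_sup.1 hu
    obtain ⟨h, rfl⟩ := Ideal.mem_span_singleton'.1 hz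
    have hQ : chxQ d t s (h * chxG d t f i) := by
      have : h * chxG d t f i = C t * u + (-1) * v := by rw [← e]; ring
      rw [this]
      exact chxQ_add (chxQ_Ct _) (chxQ_mul _ (chxQ_of_mem hv))
    obtain ⟨w, hw, h', rfl⟩ := chx_mem_of_Q f (chxQ_colon hi hQ)
    have : u - h' * chxG d t f i ∈ chxJ d t f s := by
      apply ih
      have : C t * (u - h' * chxG d t f i) = v + chxG d t f i * w := by
        rw [mul_sub, ← e]; ring
      rw [this]
      exact add_mem hv (Ideal.mul_mem_left _ _ hw)
    have e3 : u = h' * chxG d t f i + (u - h' * chxG d t f i) := by ring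
    rw [e3]
    exact Submodule.add_mem_sup (Ideal.mem_span_singleton'.2 ⟨_, rfl⟩) this

theorem chx_indep [IsDomain O] [IsNoetherianRing O] {d : ℕ} {t : O} (ht : t ≠ 0)
    (htu : ¬ IsUnit t) (f : Fin n → MvPolynomial (Fin n) O) (u : MvPolynomial (Fin n) O)
    (hu : u ∈ chxJ d t f Finset.univ) (hs : u ∈ restrictSupport O {m : Fin n →₀ ℕ | ∀ i, m i < d}) :
    u = 0 := by
  have key : ∀ k : ℕ, ∀ u : MvPolynomial (Fin n) O, u ∈ chxJ d t f Finset.univ →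
      u ∈ restrictSupport O {m : Fin n →₀ ℕ | ∀ i, m i < d} → ∀ m, t ^ k ∣ coeff m u := by
    intro k
    induction k with
    | zero => intro u _ _ m; simp
    | succ k ih =>
      intro u hu hs m
      rw [mem_restrictSupport_iff] at hs
      have h1 : C t ∣ u := by
        rw [C_dvd_iff_dvd_coeff]
        intro m
        by_cases hm : ∀ i, m i < d
        · exact chxQ_of_mem hu m (fun i _ => hm i)
        · have : coeff m u = 0 := by
            by_contra h
            exact hm (hs (by simpa using h))
          rw [this]; simp
      obtain ⟨u', rfl⟩ := h1
      rw [coeff_C_mul, pow_succ']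
      refine mul_dvd_mul_left _ (ih u' (chx_sat ht f _ _ hu) ?_ m)
      rw [mem_restrictSupport_iff]
      intro m hm
      apply hs
      simp only [Finset.mem_coe, mem_support_iff, coeff_C_mul] at hm ⊢
      exact mul_ne_zero ht hm
  ext m
  have hb := Ideal.iInf_pow_eq_bot_of_isDomain (Ideal.span {t})
    (by rwa [Ne, Ideal.span_singleton_eq_top])
  have : coeff m u ∈ (⨅ i : ℕ, Ideal.span {t} ^ i) := by
    rw [Ideal.mem_iInf]
    intro k
    rw [Ideal.span_singleton_pow, Ideal.mem_span_singleton]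
    exact key k u hu hs m
  rw [hb] at this
  simpa using this

theorem chx_span {d : ℕ} (t : O) (f : Fin n → MvPolynomial (Fin n) O)
    (hf : ∀ i, (f i).totalDegree ≤ d) (D : ℕ) :
    ∃ p : O, p - 1 ∈ Ideal.span {t} ∧ ∀ u ∈ restrictTotalDegree (Fin n) O D,
      p • u ∈ restrictSupport O {m : Fin n →₀ ℕ | ∀ i, m i < d} ⊔
        (chxJ d t f Finset.univ).restrictScalars O := by
  set P := restrictSupport O {m : Fin n →₀ ℕ | ∀ i, m i < d} ⊔
        (chxJ d t f Finset.univ).restrictScalars O with hP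
  set N := restrictTotalDegree (Fin n) O D with hN
  have hfg : N.FG := Module.Finite.iff_fg.1 inferInstance
  have hle : N ≤ P ⊔ Ideal.span {t} • N := by
    intro u hu
    rw [u.as_sum]
    refine sum_mem fun m hm => ?_
    by_cases hs : ∀ i, m i < d
    · refine Submodule.mem_sup_left (Submodule.mem_sup_left ?_)
      exact (monomial_mem_restrictSupport O).2 (Or.inl hs)
    · push Not at hs
      obtain ⟨i, hd⟩ := hs
      obtain ⟨m', e0, e⟩ := chx_monomial_split hd (coeff m u)
      rw [e]
      have : monomial m' (coeff m u) * X i ^ d =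
        monomial m' (coeff m u) * chxG d t f i + t • (- f i * monomial m' (coeff m u)) := by
        simp only [chxG, smul_eq_C_mul]; ring
      rw [this]
      refine Submodule.add_mem_sup (Submodule.mem_sup_right ?_) (Submodule.smul_mem_smul
        (Ideal.mem_span_singleton_self t) ?_)
      · exact Ideal.mul_mem_left _ _ (chxG_mem (Finset.mem_univ i))
      · rw [hN, mem_restrictTotalDegree] at hu ⊢
        have h1 : m.degree ≤ D := (le_totalDegree hm).trans hu
        refine (totalDegree_mul _ _).trans ?_
        rw [totalDegree_neg]
        have h2 : (monomial m' (coeff m u)).totalDegree ≤ m'.degree := totalDegree_monomial_le _ _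
        have h3 : m.degree = m'.degree + d := by rw [e0]; simp
        have := hf i
        omega
  have hle2 : N.map P.mkQ ≤ Ideal.span {t} • N.map P.mkQ := by
    rw [← Submodule.map_smul'']
    refine (Submodule.map_mono hle).trans ?_
    rw [Submodule.map_sup]
    simp
  obtain ⟨p, hp, hp2⟩ := Submodule.exists_sub_one_mem_and_smul_eq_zero_of_fg_of_le_smul
    (Ideal.span {t}) (N.map P.mkQ) (hfg.map _) hle2
  refine ⟨p, hp, fun u hu => ?_⟩
  have := hp2 _ (Submodule.mem_map_of_mem hu)
  rw [← map_smul] at this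
  rwa [← LinearMap.mem_ker, Submodule.ker_mkQ] at this

theorem chx_card (d n : ℕ) : Nat.card {m : Fin n →₀ ℕ | ∀ i, m i < d} = d ^ n := by
  have e : {m : Fin n →₀ ℕ | ∀ i, m i < d} ≃ (Fin n → Fin d) :=
    { toFun := fun m i => ⟨m.1 i, m.2 i⟩
      invFun := fun a => ⟨Finsupp.equivFunOnFinite.symm (fun i => (a i : ℕ)), fun i => by simp⟩
      left_inv := fun m => by ext; simp
      right_inv := fun a => by ext; simp }
  rw [Nat.card_congr e]; simp

theorem chx_top {d : ℕ} (hd : 0 < d) (t : O) (f : Fin n → MvPolynomial (Fin n) O)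
    (H : ∀ u ∈ restrictTotalDegree (Fin n) O (n * d + 1),
      u ∈ restrictSupport O {m : Fin n →₀ ℕ | ∀ i, m i < d} ⊔
        (chxJ d t f Finset.univ).restrictScalars O) (u : MvPolynomial (Fin n) O) :
    u ∈ restrictSupport O {m : Fin n →₀ ℕ | ∀ i, m i < d} ⊔
        (chxJ d t f Finset.univ).restrictScalars O := by
  induction u using MvPolynomial.induction_on with
  | C a =>
    apply H
    rw [mem_restrictTotalDegree]; simp
  | add p q hp hq => exact add_mem hp hq
  | mul_X p i hp =>
    obtain ⟨s, hs, j, hj, rfl⟩ := Submodule.mem_sup.1 hp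
    rw [add_mul]
    refine add_mem (H _ ?_) (Submodule.mem_sup_right ?_)
    · rw [mem_restrictTotalDegree]
      refine (totalDegree_mul _ _).trans (add_le_add ?_ ?_)
      · refine Finset.sup_le fun m hm => ?_
        have hm' : ∀ i, m i < d := hs hm
        change (m.sum fun _ e => e) ≤ _
        rw [Finsupp.sum_fintype _ _ (fun _ => rfl)]
        refine (Finset.sum_le_sum (fun i _ => (hm' i).le)).trans ?_
        simp
      · by_cases h : Nontrivial O
        · simp
        · rw [not_nontrivial_iff_subsingleton] at h
          rw [Subsingleton.elim (X i : MvPolynomial (Fin n) O) 0]; simp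
    · exact Ideal.mul_mem_right _ _ hj

theorem chx_finrank [IsDomain O] [IsNoetherianRing O] {d : ℕ} (hd : 0 < d) {t : O} (ht : t ≠ 0)
    (htu : ¬ IsUnit t) (f : Fin n → MvPolynomial (Fin n) O)
    (H : ∀ u ∈ restrictTotalDegree (Fin n) O (n * d + 1),
      u ∈ restrictSupport O {m : Fin n →₀ ℕ | ∀ i, m i < d} ⊔
        (chxJ d t f Finset.univ).restrictScalars O) :
    Module.finrank O (MvPolynomial (Fin n) O ⧸ chxJ d t f Finset.univ) = d ^ n ∧
    Module.Free O (MvPolynomial (Fin n) O ⧸ chxJ d t f Finset.univ) := by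
  let St := restrictSupport O {m : Fin n →₀ ℕ | ∀ i, m i < d}
  let L : St →ₗ[O] (MvPolynomial (Fin n) O ⧸ chxJ d t f Finset.univ) :=
    (Ideal.Quotient.mkₐ O (chxJ d t f Finset.univ)).toLinearMap ∘ₗ St.subtype
  have hL : Function.Bijective L := by
    constructor
    · rw [← LinearMap.ker_eq_bot, LinearMap.ker_eq_bot']
      intro u hu
      have : (u : MvPolynomial (Fin n) O) ∈ chxJ d t f Finset.univ :=
        Ideal.Quotient.eq_zero_iff_mem.1 hu
      exact Subtype.ext (chx_indep ht htu f u this u.2)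
    · intro x
      obtain ⟨u, rfl⟩ := Ideal.Quotient.mk_surjective x
      obtain ⟨s, hs, j, hj, rfl⟩ := Submodule.mem_sup.1 (chx_top hd t f H u)
      refine ⟨⟨s, hs⟩, ?_⟩
      rw [map_add, Ideal.Quotient.eq_zero_iff_mem.2 (show j ∈ chxJ d t f Finset.univ from hj), add_zero]
      rfl
  let b := (basisRestrictSupport O {m : Fin n →₀ ℕ | ∀ i, m i < d}).map (LinearEquiv.ofBijective L hL)
  exact ⟨by rw [Module.finrank_eq_nat_card_basis b, chx_card], Module.Free.of_basis b⟩

end chx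

theorem chx_solve {n d : ℕ} (hd : Odd d) (h : Fin n → MvPolynomial (Fin n) ℝ)
    (hh : ∀ i, (h i).totalDegree ≤ d) :
    ∃ p : Polynomial ℝ, p ≠ 0 ∧ ∀ t₀ : ℝ, p.eval t₀ ≠ 0 →
      ∃ a : Fin n → ℝ, ∀ i, a i ^ d + t₀ * eval a (h i) = 0 := by
  obtain ⟨p, hp, hspan⟩ := chx_span (O := Polynomial ℝ) (d := d) Polynomial.X
    (fun i => map Polynomial.C (h i))
    (fun i => (Finset.sup_mono (support_map_subset _ _)).trans (hh i)) (n * d + 1)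
  have hp0 : p.eval 0 = 1 := by
    obtain ⟨q, hq⟩ := Ideal.mem_span_singleton.1 hp
    have := congrArg (Polynomial.eval 0) hq
    simp at this
    linarith
  have hpne : p ≠ 0 := by rintro rfl; simp at hp0
  refine ⟨p, hpne, fun t₀ ht₀ => ?_⟩
  let O := Localization.Away p
  let ι : Polynomial ℝ →+* O := algebraMap _ _
  let t : O := ι Polynomial.X
  let f : Fin n → MvPolynomial (Fin n) O := fun i => map (ι.comp Polynomial.C) (h i)
  have hle : Submonoid.powers p ≤ nonZeroDivisors (Polynomial ℝ) :=
    powers_le_nonZeroDivisors_of_noZeroDivisors hpne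
  have : IsDomain O := IsLocalization.isDomain_localization hle
  have : IsNoetherianRing O := IsLocalization.isNoetherianRing (Submonoid.powers p) O inferInstance
  have hinj : Function.Injective ι := IsLocalization.injective O hle
  have ht : t ≠ 0 := by
    intro e
    exact Polynomial.X_ne_zero (hinj (e.trans (map_zero ι).symm))
  have hlift : ∀ x : ℝ, p.eval x ≠ 0 → ∃ ev : O →+* ℝ, ∀ q, ev (ι q) = q.eval x := by
    intro x hx
    refine ⟨IsLocalization.Away.lift p (g := Polynomial.evalRingHom x) (by simpa using hx), fun q => ?_⟩
    simpa using IsLocalization.Away.lift_eq p (g := Polynomial.evalRingHom x) (by simpa using hx) q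
  have htu : ¬ IsUnit t := by
    obtain ⟨ev, hev⟩ := hlift 0 (by rw [hp0]; norm_num)
    intro hu
    have := hu.map ev
    rw [hev] at this
    simp at this
  have hpu : IsUnit (ι p) := IsLocalization.Away.algebraMap_isUnit p
  have H : ∀ u ∈ restrictTotalDegree (Fin n) O (n * d + 1),
      u ∈ restrictSupport O {m : Fin n →₀ ℕ | ∀ i, m i < d} ⊔
        (chxJ d t f Finset.univ).restrictScalars O := by
    have key : ∀ v, v ∈ restrictSupport (Polynomial ℝ) {m : Fin n →₀ ℕ | ∀ i, m i < d} ⊔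
        (chxJ d Polynomial.X (fun i => map Polynomial.C (h i)) Finset.univ).restrictScalars
          (Polynomial ℝ) →
        map ι v ∈ restrictSupport O {m : Fin n →₀ ℕ | ∀ i, m i < d} ⊔
        (chxJ d t f Finset.univ).restrictScalars O := by
      intro v hv
      obtain ⟨s, hs, j, hj, rfl⟩ := Submodule.mem_sup.1 hv
      rw [map_add]
      refine Submodule.add_mem_sup ?_ ?_
      · rw [mem_restrictSupport_iff] at hs ⊢
        exact fun m hm => hs (support_map_subset _ _ hm)
      · have : j ∈ (chxJ d t f Finset.univ).comap (map ι) := by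
          have hj' : j ∈ chxJ d Polynomial.X (fun i => map Polynomial.C (h i)) Finset.univ := hj
          refine (Ideal.span_le.2 ?_) hj'
          rintro _ ⟨i, hi, rfl⟩
          have : map ι (chxG d Polynomial.X (fun i => map Polynomial.C (h i)) i) = chxG d t f i := by
            simp [chxG, f, t, map_map]
          rw [SetLike.mem_coe, Ideal.mem_comap]
          rw [this]
          exact chxG_mem (Finset.mem_univ i)
        exact this
    intro u hu
    rw [u.as_sum]
    refine sum_mem fun m hm => ?_
    have h1 := key _ (hspan (monomial m 1) (by
      rw [mem_restrictTotalDegree] at hu ⊢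
      exact (totalDegree_monomial_le _ _).trans ((le_totalDegree hm).trans hu)))
    obtain ⟨c, hc⟩ := hpu.exists_left_inv
    have h2 := Submodule.smul_mem _ (coeff m u * c) h1
    have h3 : (coeff m u * c) • map ι (p • monomial m 1) = monomial m (coeff m u) := by
      rw [smul_monomial, map_monomial, smul_monomial]
      simp [mul_assoc, hc]
    rwa [h3] at h2
  obtain ⟨hfr, hfree⟩ := chx_finrank hd.pos ht htu f H
  obtain ⟨ev, hev⟩ := hlift t₀ ht₀
  letI : Algebra O ℝ := ev.toAlgebra
  let B := MvPolynomial (Fin n) O ⧸ chxJ d t f Finset.univ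
  have hC : Module.finrank ℝ (TensorProduct O ℝ B) = d ^ n := by
    rw [Module.finrank_baseChange]; exact hfr
  have : FiniteDimensional ℝ (TensorProduct O ℝ B) :=
    Module.finite_of_finrank_pos (by rw [hC]; exact pow_pos hd.pos n)
  obtain ⟨φ⟩ := chx_eig (C := TensorProduct O ℝ B) (d ^ n) (TensorProduct O ℝ B) hC hd.pow
  let ψ : MvPolynomial (Fin n) O →+* ℝ :=
    (φ.toRingHom.comp (Algebra.TensorProduct.includeRight (R := O) (A := ℝ) (B := B)).toRingHom).comp
      (Ideal.Quotient.mk (chxJ d t f Finset.univ))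
  have hψC : ∀ c, ψ (C c) = ev c := by
    intro c
    have e1 : (Ideal.Quotient.mk (chxJ d t f Finset.univ)) (C c) = algebraMap O B c := rfl
    have e2 : Algebra.TensorProduct.includeRight (R := O) (A := ℝ) (B := B) (algebraMap O B c)
      = TensorProduct.tmul O (algebraMap O ℝ c) (1 : B) := by
      rw [AlgHom.commutes]; rfl
    show φ (Algebra.TensorProduct.includeRight (R := O) (A := ℝ) (B := B)
      ((Ideal.Quotient.mk (chxJ d t f Finset.univ)) (C c))) = ev c
    rw [e1, e2]; exact φ.commutes _
  have hψ : ψ = eval₂Hom ev (fun i => ψ (X i)) := by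
    apply MvPolynomial.ringHom_ext
    · intro c; rw [hψC]; simp
    · intro i; simp
  refine ⟨fun i => ψ (X i), fun i => ?_⟩
  have h0 : ψ (chxG d t f i) = 0 := by
    have : (Ideal.Quotient.mk (chxJ d t f Finset.univ)) (chxG d t f i) = 0 :=
      Ideal.Quotient.eq_zero_iff_mem.2 (chxG_mem (Finset.mem_univ i))
    simp only [ψ, RingHom.comp_apply, this, map_zero]
  have h1 : ψ (f i) = eval (fun i => ψ (X i)) (h i) := by
    rw [hψ]
    simp only [f, coe_eval₂Hom, eval₂_map, eval₂_X, eval]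
    congr 1
    ext x
    simp [hev]
  rw [← h0, ← h1]
  simp only [chxG, map_add, map_mul, map_pow, hψC, t, hev, Polynomial.eval_X]

theorem chx_hom_eval {k d : ℕ} {f : MvPolynomial (Fin k) ℝ} (hf : f.IsHomogeneous d) (c : ℝ)
    (x : Fin k → ℝ) : eval (fun i => c * x i) f = c ^ d * eval x f := by
  rw [eval_eq', eval_eq', Finset.mul_sum]
  refine Finset.sum_congr rfl fun m hm => ?_
  have h1 : ∑ i, m i = d := by
    rw [hf.degree_eq_sum_deg_support hm, ← Finsupp.degree_apply, Finsupp.degree_eq_sum]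
  simp_rw [mul_pow]
  rw [Finset.prod_mul_distrib, Finset.prod_pow_eq_pow_sum, h1]
  ring

theorem chx_sphere {n d : ℕ} (hd : Odd d) (f : Fin n → MvPolynomial (Fin (n + 1)) ℝ)
    (hf : ∀ i, (f i).IsHomogeneous d) :
    ∃ x : Fin (n + 1) → ℝ, ∑ i, x i ^ 2 = 1 ∧ ∀ i, eval x (f i) = 0 := by
  let h : Fin n → MvPolynomial (Fin n) ℝ := fun i => aeval (Fin.cons 1 X : Fin (n + 1) → _) (f i)
  have hh : ∀ i, (h i).totalDegree ≤ d := by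
    intro i
    simp only [h]
    rw [aeval_eq_eval₂Hom, coe_eval₂Hom, eval₂_eq']
    refine totalDegree_finsetSum_le fun m hm => ?_
    refine (totalDegree_mul _ _).trans ?_
    have h1 : ∑ i, m i = d := by
      rw [(hf i).degree_eq_sum_deg_support hm, ← Finsupp.degree_apply, Finsupp.degree_eq_sum]
    rw [algebraMap_eq, totalDegree_C, zero_add, ← h1]
    refine (totalDegree_finsetProd _ _).trans (Finset.sum_le_sum fun j _ => ?_)
    refine (totalDegree_pow _ _).trans ?_
    refine Fin.cases ?_ (fun j => ?_) j <;> simp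
  have hev : ∀ i a, eval a (h i) = eval (Fin.cons 1 a : Fin (n + 1) → ℝ) (f i) := by
    intro i a
    simp only [h]
    rw [← coe_aeval_eq_eval a, ← coe_aeval_eq_eval (Fin.cons 1 a : Fin (n + 1) → ℝ)]
    show aeval a (aeval _ (f i)) = aeval _ (f i)
    rw [← AlgHom.comp_apply]
    congr 1
    ext j
    refine Fin.cases ?_ (fun j => ?_) j <;> simp
  obtain ⟨p, hp, hsol⟩ := chx_solve hd h hh
  let K : Set (Fin (n + 1) → ℝ) := {x | ∑ i, x i ^ 2 = 1}
  have hbd : ∀ x ∈ K, ∀ i, |x i| ≤ 1 := by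
    intro x hx i
    have : x i ^ 2 ≤ ∑ i, x i ^ 2 :=
      Finset.single_le_sum (f := fun i => x i ^ 2) (fun i _ => sq_nonneg _) (Finset.mem_univ i)
    rw [show ∑ i, x i ^ 2 = 1 from hx] at this
    exact (sq_le_one_iff_abs_le_one _).1 this
  have hK : IsCompact K := by
    refine Metric.isCompact_of_isClosed_isBounded (isClosed_eq (by fun_prop) (by fun_prop)) ?_
    refine (Metric.isBounded_closedBall (x := (0 : Fin (n + 1) → ℝ)) (r := 1)).subset ?_
    intro x hx
    rw [mem_closedBall_zero_iff, pi_norm_le_iff_of_nonneg zero_le_one]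
    exact hbd x hx
  have hne : K.Nonempty := ⟨Fin.cons 1 0, by simp [K, Fin.sum_univ_succ]⟩
  let F : (Fin (n + 1) → ℝ) → ℝ := fun x => ∑ i, eval x (f i) ^ 2
  have hF : Continuous F := by
    refine continuous_finsetSum _ fun i _ => ?_
    exact (MvPolynomial.continuous_eval (f i)).pow 2
  obtain ⟨x, hx, hmin⟩ := hK.exists_isMinOn hne hF.continuousOn
  refine ⟨x, hx, ?_⟩
  by_contra hcon
  push Not at hcon
  obtain ⟨i₀, hi₀⟩ := hcon
  have hpos : 0 < F x := by
    have : eval x (f i₀) ^ 2 ≤ F x :=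
      Finset.single_le_sum (f := fun i => eval x (f i) ^ 2) (fun i _ => sq_nonneg _)
        (Finset.mem_univ i₀)
    exact lt_of_lt_of_le (by positivity) this
  -- choose a large parameter
  obtain ⟨t, ht1, htF, htp⟩ : ∃ t : ℝ, 1 ≤ t ∧ n / F x < t ∧ p.eval t ≠ 0 := by
    have hfin : {t | p.IsRoot t}.Finite := Polynomial.finite_setOfPred_isRoot hp
    have hinf : (Set.Ioi (max 1 (n / F x))).Infinite := Set.Ioi_infinite _
    obtain ⟨t, ht, ht'⟩ := (hinf.sdiff hfin).nonempty
    exact ⟨t, (le_max_left _ _).trans ht.le, (le_max_right _ _).trans_lt ht, ht'⟩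
  have ht0 : 0 < t := by linarith
  obtain ⟨a, ha⟩ := hsol t htp
  let y : Fin (n + 1) → ℝ := Fin.cons 1 a
  have hy1 : 0 < ∑ i, y i ^ 2 := by
    rw [Fin.sum_univ_succ]
    have : 0 ≤ ∑ i : Fin n, y i.succ ^ 2 := Finset.sum_nonneg fun i _ => sq_nonneg _
    simp only [y, Fin.cons_zero] at *
    linarith
  let c : ℝ := (Real.sqrt (∑ i, y i ^ 2))⁻¹
  have hc : c ^ 2 * ∑ i, y i ^ 2 = 1 := by
    simp only [c, inv_pow, Real.sq_sqrt hy1.le]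
    exact inv_mul_cancel₀ hy1.ne'
  let z : Fin (n + 1) → ℝ := fun i => c * y i
  have hz : z ∈ K := by
    show ∑ i, (c * y i) ^ 2 = 1
    simp_rw [mul_pow]
    rw [← Finset.mul_sum, hc]
  have hzf : ∀ i, eval z (f i) ^ 2 ≤ 1 / t := by
    intro i
    have e : z i.succ ^ d + t * eval z (f i) = 0 := by
      have h1 := ha i
      rw [hev] at h1
      simp only [z]
      rw [chx_hom_eval (hf i), mul_pow]
      have : y i.succ = a i := by simp [y]
      rw [this]
      linear_combination c ^ d * h1
    have hb : (z i.succ ^ d) ^ 2 ≤ 1 := by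
      rw [sq_le_one_iff_abs_le_one, abs_pow]
      exact pow_le_one₀ (abs_nonneg _) (hbd z hz _)
    have e2 : t ^ 2 * eval z (f i) ^ 2 ≤ 1 := by
      have : t * eval z (f i) = - z i.succ ^ d := by linarith
      rw [← mul_pow, this, neg_sq]; exact hb
    rw [le_div_iff₀ ht0]
    nlinarith [sq_nonneg (eval z (f i)), mul_nonneg ht0.le (sq_nonneg (eval z (f i)))]
  have h1 : F x ≤ F z := hmin hz
  have h2 : F z ≤ n * (1 / t) := by
    refine (Finset.sum_le_sum fun i _ => hzf i).trans ?_
    simp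
  rw [div_lt_iff₀ hpos] at htF
  have h3 : (n : ℝ) * (1 / t) < F x := by
    rw [mul_one_div, div_lt_iff₀ ht0]; linarith
  linarith

theorem chx_odd {n : ℕ} (P : Fin n → MvPolynomial (Fin (n + 1)) ℝ) :
    ∃ x : Fin (n + 1) → ℝ, ∑ i, x i ^ 2 = 1 ∧ ∀ i, eval x (P i) = eval (fun j => - x j) (P i) := by
  let M := Finset.univ.sup fun i => (P i).totalDegree
  let d := 2 * M + 1
  let f : Fin n → MvPolynomial (Fin (n + 1)) ℝ := fun i =>
    ∑ k ∈ (Finset.range (d + 1)).filter Odd, homogeneousComponent k (P i) *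
      (∑ j, X j ^ 2) ^ ((d - k) / 2)
  have hf : ∀ i, (f i).IsHomogeneous d := by
    intro i
    refine IsHomogeneous.sum _ _ _ fun k hk => ?_
    rw [Finset.mem_filter, Finset.mem_range] at hk
    obtain ⟨hk, l, hl⟩ := hk
    have e : d = k + 2 * ((d - k) / 2) := by omega
    have := (homogeneousComponent_isHomogeneous k (P i)).mul
      ((IsHomogeneous.sum Finset.univ (fun j => (X j ^ 2 : MvPolynomial (Fin (n + 1)) ℝ)) 2
        (fun j _ => isHomogeneous_X_pow j 2)).pow ((d - k) / 2))
    rwa [← e] at this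
  obtain ⟨x, hx, hx0⟩ := chx_sphere (d := d) ⟨M, rfl⟩ f hf
  refine ⟨x, hx, fun i => ?_⟩
  have hP : P i = ∑ k ∈ Finset.range (d + 1), homogeneousComponent k (P i) := by
    have hle : (P i).totalDegree ≤ M :=
      Finset.le_sup (f := fun i => (P i).totalDegree) (Finset.mem_univ i)
    conv_lhs => rw [← sum_homogeneousComponent (P i)]
    refine Finset.sum_subset (Finset.range_mono (by omega)) fun k _ hk => ?_
    rw [Finset.mem_range] at hk
    exact homogeneousComponent_eq_zero _ _ (by omega)
  have h0 := hx0 i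
  simp only [f, map_sum, map_mul, map_pow, eval_X, hx, one_pow, mul_one] at h0
  rw [hP, map_sum, map_sum, ← sub_eq_zero, ← Finset.sum_sub_distrib]
  rw [Finset.sum_filter] at h0
  have : ∀ k ∈ Finset.range (d + 1), eval x (homogeneousComponent k (P i)) -
      eval (fun j => - x j) (homogeneousComponent k (P i)) =
      2 * (if Odd k then eval x (homogeneousComponent k (P i)) else 0) := by
    intro k _
    have e := chx_hom_eval (homogeneousComponent_isHomogeneous k (P i)) (-1) x
    simp only [neg_one_mul] at e
    rw [e]
    split_ifs with ho
    · rw [ho.neg_one_pow]; ring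
    · rw [(Nat.not_odd_iff_even.1 ho).neg_one_pow]; ring
  rw [Finset.sum_congr rfl this, ← Finset.mul_sum, h0, mul_zero]

/-- **the example of Chase.** Let `S = ℝ[z₁,…,z_r]/(Σ zᵢ² − 1)`, let `σ` be
the `ℝ`-algebra automorphism of `S` negating all the `zᵢ`, and let `R = S^σ` be the fixed
subring. Then `S` cannot be generated as an `R`-algebra by fewer than `r` elements: any
`r − 1` elements of `S` generate a proper `R`-subalgebra. -/
theorem chase_example_needs_r_generators
    (r : ℕ) (hr : 1 ≤ r)
    (σ : Sring r ≃ₐ[ℝ] Sring r) (hσ : ∀ i, σ (Sz r i) = - Sz r i)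
    (s : Fin (r - 1) → Sring r) :
    Algebra.adjoin (↥(AlgHom.equalizer σ.toAlgHom (AlgHom.id ℝ (Sring r))))
      (Set.range s) ≠ ⊤ := by
  obtain ⟨n, rfl⟩ : ∃ n, r = n + 1 := ⟨r - 1, by omega⟩
  intro htop
  have hs : ∀ i, ∃ P, Ideal.Quotient.mk (sphereIdeal (n + 1)) P = s i := fun i =>
    Ideal.Quotient.mk_surjective (s i)
  choose P hP using hs
  obtain ⟨x, hx, hxP⟩ := chx_odd (n := n) P
  have hker : ∀ y : Fin (n + 1) → ℝ, ∑ i, y i ^ 2 = 1 →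
      ∀ a ∈ sphereIdeal (n + 1), aeval (R := ℝ) y a = 0 := by
    intro y hy a ha
    obtain ⟨b, rfl⟩ := Ideal.mem_span_singleton.1 ha
    simp [hy]
  let e1 : Sring (n + 1) →ₐ[ℝ] ℝ := Ideal.Quotient.liftₐ _ (aeval x) (hker x hx)
  let e2 : Sring (n + 1) →ₐ[ℝ] ℝ := Ideal.Quotient.liftₐ _ (aeval fun j => - x j)
    (hker _ (by simpa using hx))
  have e1P : ∀ Q, e1 (Ideal.Quotient.mk _ Q) = eval x Q := fun Q => by
    rw [← coe_aeval_eq_eval]; rfl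
  have e2P : ∀ Q, e2 (Ideal.Quotient.mk _ Q) = eval (fun j => - x j) Q := fun Q => by
    rw [← coe_aeval_eq_eval]; rfl
  have hcomp : e1.comp σ.toAlgHom = e2 := by
    apply Ideal.Quotient.algHom_ext
    apply MvPolynomial.algHom_ext
    intro i
    show e1 (σ (Sz (n + 1) i)) = e2 (Sz (n + 1) i)
    rw [hσ, map_neg, e1P, e2P]
    simp
  have hR : ∀ a ∈ AlgHom.equalizer σ.toAlgHom (AlgHom.id ℝ (Sring (n + 1))), e1 a = e2 a := by
    intro a ha
    have ha' : σ.toAlgHom a = a := ha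
    rw [← hcomp, AlgHom.comp_apply, ha']
  have hall : ∀ a : Sring (n + 1), e1 a = e2 a := by
    intro a
    have ha : a ∈ Algebra.adjoin (↥(AlgHom.equalizer σ.toAlgHom (AlgHom.id ℝ (Sring (n + 1)))))
      (Set.range s) := by rw [htop]; trivial
    refine Algebra.adjoin_induction ?_ ?_ ?_ ?_ ha
    · rintro _ ⟨i, rfl⟩
      rw [← hP, e1P, e2P]; exact hxP i
    · intro c; exact hR c.1 c.2
    · intro a b _ _ h1 h2; rw [map_add, map_add, h1, h2]
    · intro a b _ _ h1 h2; rw [map_mul, map_mul, h1, h2]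
  have hzero : ∀ i, x i = 0 := by
    intro i
    have := hall (Sz (n + 1) i)
    rw [e1P, e2P] at this
    simp at this
    linarith
  simp [hzero] at hx
end

section
/- Let k be a field of characteristic different from 2 containing an element i with i² = −1, let r ≥ 1, let T = k[x_1, …, x_r, y_1, …, y_r]/(x_1y_1 + ⋯ + x_ry_r − 1), let σ be the k-algebra automorphism of T determined by σ(x_i) = −x_i and σ(y_i) = −y_i for all i, and let R = T^σ be the fixed subring. Then T cannot be generated as an R-algebra by fewer than r elements: for any elements t_1, …, t_{r−1} ∈ T, the smallest R-subalgebra of T containing t_1, …, t_{r−1} is a proper subalgebra of T. -/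
open MvPolynomial

/-- The ideal `(x₁y₁ + ⋯ + x_ry_r − 1)` in `k[x₁,…,x_r,y₁,…,y_r]`, where the `x`s are
indexed by `Sum.inl` and the `y`s by `Sum.inr`. -/
noncomputable abbrev hypIdeal (k : Type u) [Field k] (r : ℕ) :
    Ideal (MvPolynomial (Fin r ⊕ Fin r) k) :=
  Ideal.span {(∑ i : Fin r, X (Sum.inl i) * X (Sum.inr i)) - 1}

/-- The ring `T = k[x₁,…,x_r,y₁,…,y_r]/(x₁y₁ + ⋯ + x_ry_r − 1)`. -/
noncomputable abbrev Tring (k : Type u) [Field k] (r : ℕ) :=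
  MvPolynomial (Fin r ⊕ Fin r) k ⧸ hypIdeal k r

/-- The class of `x_j` in `T`. -/
noncomputable abbrev Tx (k : Type u) [Field k] (r : ℕ) (j : Fin r) : Tring k r :=
  Ideal.Quotient.mk (hypIdeal k r) (X (Sum.inl j))

/-- The class of `y_j` in `T`. -/
noncomputable abbrev Ty (k : Type u) [Field k] (r : ℕ) (j : Fin r) : Tring k r :=
  Ideal.Quotient.mk (hypIdeal k r) (X (Sum.inr j))

namespace DQ
open Filter

def Df (f : ℕ → ℤ) : ℕ → ℤ := fun m => f (m+1) - f m

/-- `Δ^s f` is eventually the constant `e`. -/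
def Ev (s : ℕ) (e : ℤ) (f : ℕ → ℤ) : Prop := ∀ᶠ m in atTop, (Df^[s] f) m = e

lemma Df_congr {f g : ℕ → ℤ} (h : ∀ᶠ m in atTop, f m = g m) : ∀ᶠ m in atTop, Df f m = Df g m := by
  have h' := (tendsto_add_atTop_nat 1).eventually h
  filter_upwards [h, h'] with m h1 h2
  simp [Df, h1, h2]

lemma Df_iter_congr {f g : ℕ → ℤ} (s : ℕ) (h : ∀ᶠ m in atTop, f m = g m) :
    ∀ᶠ m in atTop, Df^[s] f m = Df^[s] g m := by
  induction s generalizing f g with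
  | zero => simpa using h
  | succ s ih => simp only [Function.iterate_succ_apply]; exact ih (Df_congr h)

lemma Df_iter_add (f g : ℕ → ℤ) (s : ℕ) :
    Df^[s] (fun m => f m + g m) = fun m => Df^[s] f m + Df^[s] g m := by
  induction s generalizing f g with
  | zero => rfl
  | succ s ih =>
    simp only [Function.iterate_succ_apply]
    rw [← ih]; congr 1; funext m; simp only [Df]; ring

lemma Df_iter_sub (f g : ℕ → ℤ) (s : ℕ) :
    Df^[s] (fun m => f m - g m) = fun m => Df^[s] f m - Df^[s] g m := by
  induction s generalizing f g with
  | zero => rfl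
  | succ s ih =>
    simp only [Function.iterate_succ_apply]
    rw [← ih]; congr 1; funext m; simp only [Df]; ring

lemma Df_iter_shift (f : ℕ → ℤ) (d s : ℕ) :
    Df^[s] (fun m => f (m + d)) = fun m => Df^[s] f (m + d) := by
  induction s generalizing f with
  | zero => rfl
  | succ s ih =>
    simp only [Function.iterate_succ_apply]
    rw [← ih]; congr 1; funext m; simp only [Df]; congr 2; ring

lemma ev_shift {f : ℕ → ℤ} {s : ℕ} {e : ℤ} (d : ℕ) :
    Ev s e (fun m => f (m + d)) ↔ Ev s e f := by
  unfold Ev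
  rw [Df_iter_shift]
  simp only [eventually_atTop]
  constructor
  · rintro ⟨a, h⟩
    refine ⟨a + d, fun b hb => ?_⟩
    have := h (b - d) (by omega)
    rwa [Nat.sub_add_cancel (by omega)] at this
  · rintro ⟨a, h⟩
    exact ⟨a, fun b hb => h _ (by omega)⟩

lemma ev_add {f g : ℕ → ℤ} {s : ℕ} {a b : ℤ} (hf : Ev s a f) (hg : Ev s b g) :
    Ev s (a + b) (fun m => f m + g m) := by
  unfold Ev; rw [Df_iter_add]
  filter_upwards [hf, hg] with m h1 h2; rw [h1, h2]

lemma ev_sub {f g : ℕ → ℤ} {s : ℕ} {a b : ℤ} (hf : Ev s a f) (hg : Ev s b g) :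
    Ev s (a - b) (fun m => f m - g m) := by
  unfold Ev; rw [Df_iter_sub]
  filter_upwards [hf, hg] with m h1 h2; rw [h1, h2]

lemma ev_succ {f : ℕ → ℤ} {s : ℕ} {a : ℤ} (hf : Ev s a f) : Ev (s+1) 0 f := by
  unfold Ev; rw [Function.iterate_succ_apply']
  have h' := (tendsto_add_atTop_nat 1).eventually hf
  filter_upwards [hf, h'] with m h1 h2
  simp [Df, h1, h2]

lemma ev_mono {f : ℕ → ℤ} {s t : ℕ} (hst : s ≤ t) (hf : Ev s 0 f) : Ev t 0 f := by
  induction t, hst using Nat.le_induction with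
  | base => exact hf
  | succ t _ ih => exact ev_succ ih

lemma ev_of_succ {f : ℕ → ℤ} {s : ℕ} (hf : Ev (s+1) 0 f) : ∃ e, Ev s e f := by
  unfold Ev at hf; rw [Function.iterate_succ_apply'] at hf
  obtain ⟨a, h⟩ := eventually_atTop.1 hf
  refine ⟨Df^[s] f a, eventually_atTop.2 ⟨a, fun b hb => ?_⟩⟩
  induction b, hb using Nat.le_induction with
  | base => rfl
  | succ b hb ih => have := h b hb; simp only [Df] at this; linarith

lemma ev_uniq {f : ℕ → ℤ} {s : ℕ} {a b : ℤ} (h1 : Ev s a f) (h2 : Ev s b f) : a = b := by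
  obtain ⟨m, h, h'⟩ := (h1.and h2).exists
  exact h.symm.trans h'

lemma pos_of_Df {h : ℕ → ℤ} (hh : ∀ᶠ m in atTop, 1 ≤ Df h m) : ∀ᶠ m in atTop, 1 ≤ h m := by
  obtain ⟨a, ha⟩ := eventually_atTop.1 hh
  have key : ∀ j : ℕ, h a + j ≤ h (a + j) := by
    intro j
    induction j with
    | zero => simp
    | succ j ih => have := ha (a + j) (by omega); simp only [Df] at this; push_cast; rw [← add_assoc a j 1]; linarith
  refine eventually_atTop.2 ⟨a + (1 - h a).toNat, fun b hb => ?_⟩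
  have := key (b - a)
  rw [Nat.add_sub_cancel' (by omega)] at this
  omega

lemma pos_of_iter {h : ℕ → ℤ} (s : ℕ) (hh : ∀ᶠ m in atTop, 1 ≤ Df^[s] h m) :
    ∀ᶠ m in atTop, 1 ≤ h m := by
  induction s generalizing h with
  | zero => simpa using hh
  | succ s ih => exact pos_of_Df (ih (by simpa only [Function.iterate_succ_apply] using hh))

lemma ev_of_le {f g : ℕ → ℤ} {s : ℕ} {e : ℤ} (h0 : ∀ m, 0 ≤ f m) (hfg : ∀ m, f m ≤ g m)
    (hg : Ev s e g) (hf : ∃ S, Ev S 0 f) : ∃ e', Ev s e' f := by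
  classical
  set S := Nat.find hf with hS
  have hS0 : Ev S 0 f := Nat.find_spec hf
  by_cases hc : S ≤ s + 1
  · exact ev_of_succ (ev_mono hc hS0)
  obtain ⟨T, hT⟩ : ∃ T, S = T + 1 := ⟨S - 1, by omega⟩
  rw [hT] at hS0
  obtain ⟨c, hcv⟩ := ev_of_succ hS0
  have hc0 : c ≠ 0 := by
    rintro rfl
    exact Nat.find_min hf (m := T) (by omega) hcv
  exfalso
  rcases lt_or_gt_of_ne hc0 with hneg | hpos
  · have h00 : Ev T 0 (fun m => f m - f m) := by simpa using ev_sub hcv hcv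
    have := ev_sub h00 hcv
    obtain ⟨m, hm⟩ := (pos_of_iter T (this.mono fun m hm => by rw [hm]; omega)).exists
    have := h0 m; omega
  · have hgT : Ev T 0 g := ev_mono (by omega) (ev_succ hg)
    obtain ⟨m, hm⟩ := (pos_of_iter T ((ev_sub hcv hgT).mono fun m hm => by rw [hm]; omega)).exists
    have := hfg m; omega

lemma ev_diff {f : ℕ → ℤ} {s : ℕ} {e : ℤ} (hf : Ev (s+1) e f) (d : ℕ) :
    Ev s (d * e) (fun m => f (m + d) - f m) := by
  induction d with
  | zero =>
    have : (fun m => f (m + 0) - f m) = fun m => (0:ℤ) := by funext m; simp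
    rw [this]
    have h0 : Ev 0 0 (fun _ => (0:ℤ)) := by simp [Ev]
    simpa using ev_mono (Nat.zero_le s) h0
  | succ d ih =>
    have h1 : Ev s e (fun m => f (m + 1) - f m) := by
      unfold Ev at hf ⊢; rwa [Function.iterate_succ_apply] at hf
    have h2 := (ev_shift d).2 h1
    have := ev_add ih h2
    convert this using 1
    · push_cast; ring
    · funext m; rw [show m + (d+1) = m + d + 1 by ring]; ring

lemma ev_choose (n : ℕ) : Ev n 1 (fun m => ((m + n).choose n : ℤ)) := by
  induction n with
  | zero => simp [Ev]
  | succ n ih =>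
    unfold Ev; rw [Function.iterate_succ_apply]
    have h := (ev_shift 1).2 ih
    convert h using 1
    unfold Ev
    congr! 4
    funext m
    simp only [Df]
    have := Nat.choose_succ_succ (m + 1 + n) n
    rw [show m + 1 + (n+1) = (m+1+n).succ by omega, this, show m + (n+1) = m + 1 + n by omega]
    push_cast; simp
end DQ


namespace DQ
open Filter Module
universe u
variable {F : Type u} [Field F] {n : ℕ}

def HI (I : Ideal (MvPolynomial (Fin n) F)) : Prop :=
  ∀ f ∈ I, ∀ m, homogeneousComponent m f ∈ I

/-- graded piece -/
noncomputable def gp (I : Ideal (MvPolynomial (Fin n) F)) (m : ℕ) :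
    Submodule F (MvPolynomial (Fin n) F) :=
  homogeneousSubmodule (Fin n) F m ⊓ I.restrictScalars F

lemma mem_gp {I : Ideal (MvPolynomial (Fin n) F)} {m : ℕ} {f} :
    f ∈ gp I m ↔ f.IsHomogeneous m ∧ f ∈ I := by
  simp [gp]

instance finS (m : ℕ) : FiniteDimensional F (homogeneousSubmodule (Fin n) F m) :=
  Module.Finite.iff_fg.2 (homogeneousSubmodule_fg _ _ m)

instance fingp (I : Ideal (MvPolynomial (Fin n) F)) (m : ℕ) : FiniteDimensional F (gp I m) :=
  Submodule.finiteDimensional_inf_left _ _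

noncomputable def Hf (I : Ideal (MvPolynomial (Fin n) F)) (m : ℕ) : ℤ :=
  finrank F (homogeneousSubmodule (Fin n) F m) - finrank F (gp I m)

lemma Hf_nonneg (I : Ideal (MvPolynomial (Fin n) F)) (m : ℕ) : 0 ≤ Hf I m := by
  have : finrank F (gp I m) ≤ finrank F (homogeneousSubmodule (Fin n) F m) :=
    Submodule.finrank_mono inf_le_left
  unfold Hf; omega

lemma Hf_anti {I J : Ideal (MvPolynomial (Fin n) F)} (h : I ≤ J) (m : ℕ) : Hf J m ≤ Hf I m := by
  have : finrank F (gp I m) ≤ finrank F (gp J m) :=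
    Submodule.finrank_mono (inf_le_inf_left _ h)
  unfold Hf; omega

/-- colon ideal -/
noncomputable def col (I : Ideal (MvPolynomial (Fin n) F)) (a : MvPolynomial (Fin n) F) :
    Ideal (MvPolynomial (Fin n) F) := Submodule.comap (LinearMap.mulLeft _ a) I

lemma mem_col {I : Ideal (MvPolynomial (Fin n) F)} {a f} : f ∈ col I a ↔ a * f ∈ I := by
  simp [col]

lemma comp_mul {a f : MvPolynomial (Fin n) F} {d : ℕ} (ha : a.IsHomogeneous d) (m : ℕ) :
    homogeneousComponent (m + d) (a * f) = a * homogeneousComponent m f := by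
  conv_lhs => rw [← sum_homogeneousComponent f]
  rw [Finset.mul_sum, map_sum]
  have : ∀ i ∈ Finset.range (f.totalDegree + 1),
      homogeneousComponent (m + d) (a * homogeneousComponent i f) =
      if i = m then a * homogeneousComponent i f else 0 := by
    intro i _
    rw [homogeneousComponent_of_mem (n := d + i)]
    · congr 1; simp only [eq_iff_iff]; omega
    · exact ha.mul (homogeneousComponent_isHomogeneous i f)
  rw [Finset.sum_congr rfl this, Finset.sum_ite_eq']
  split_ifs with h
  · rfl
  · rw [homogeneousComponent_eq_zero, mul_zero]
    simp at h; omega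

lemma comp_mul' {a f : MvPolynomial (Fin n) F} {d : ℕ} (ha : a.IsHomogeneous d) (m : ℕ)
    (hm : m < d) : homogeneousComponent m (a * f) = 0 := by
  rw [← sum_homogeneousComponent f, Finset.mul_sum, map_sum]
  refine Finset.sum_eq_zero fun i _ => ?_
  rw [homogeneousComponent_of_mem (n := d + i), if_neg (by omega)]
  exact ha.mul (homogeneousComponent_isHomogeneous i f)

lemma HI_col {I : Ideal (MvPolynomial (Fin n) F)} (hI : HI I) {a : MvPolynomial (Fin n) F} {d : ℕ}
    (ha : a.IsHomogeneous d) : HI (col I a) := by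
  intro f hf m
  rw [mem_col] at hf ⊢
  rw [← comp_mul ha]
  exact hI _ hf _

lemma mem_sup_a {I : Ideal (MvPolynomial (Fin n) F)} {a f : MvPolynomial (Fin n) F} :
    f ∈ I ⊔ Ideal.span {a} ↔ ∃ g ∈ I, ∃ h, g + a * h = f := by
  rw [Submodule.mem_sup]
  constructor
  · rintro ⟨g, hg, z, hz, rfl⟩
    obtain ⟨h, rfl⟩ := Ideal.mem_span_singleton'.1 hz
    exact ⟨g, hg, h, by ring⟩
  · rintro ⟨g, hg, h, rfl⟩
    exact ⟨g, hg, a * h, Ideal.mem_span_singleton.2 (dvd_mul_right _ _), rfl⟩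

lemma HI_sup {I : Ideal (MvPolynomial (Fin n) F)} (hI : HI I) {a : MvPolynomial (Fin n) F} {d : ℕ}
    (ha : a.IsHomogeneous d) : HI (I ⊔ Ideal.span {a}) := by
  intro f hf m
  rw [mem_sup_a] at hf ⊢
  obtain ⟨g, hg, h, rfl⟩ := hf
  refine ⟨homogeneousComponent m g, hI _ hg _, ?_⟩
  by_cases hm : m < d
  · exact ⟨0, by rw [map_add, comp_mul' ha m hm, mul_zero]⟩
  · obtain ⟨j, rfl⟩ : ∃ j, m = j + d := ⟨m - d, by omega⟩
    exact ⟨homogeneousComponent j h, by rw [map_add, comp_mul ha]⟩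

lemma gp_sup {I : Ideal (MvPolynomial (Fin n) F)} (hI : HI I) {a : MvPolynomial (Fin n) F} {d : ℕ}
    (ha : a.IsHomogeneous d) (m : ℕ) :
    gp (I ⊔ Ideal.span {a}) (m + d) =
      gp I (m + d) ⊔ (homogeneousSubmodule (Fin n) F m).map (LinearMap.mulLeft F a) := by
  ext f
  rw [mem_gp, mem_sup_a, Submodule.mem_sup]
  constructor
  · rintro ⟨hf, g, hg, h, rfl⟩
    refine ⟨homogeneousComponent (m+d) g, mem_gp.2 ⟨homogeneousComponent_isHomogeneous _ _, hI _ hg _⟩,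
      a * homogeneousComponent m h, ⟨_, homogeneousComponent_mem _ _, rfl⟩, ?_⟩
    rw [← comp_mul ha, ← map_add, homogeneousComponent_eq_self hf]
  · rintro ⟨g, hg, z, ⟨h, hh, rfl⟩, rfl⟩
    rw [mem_gp] at hg
    refine ⟨hg.1.add ?_, g, hg.2, h, rfl⟩
    rw [add_comm m d]; exact ha.mul hh

lemma gp_inf {I : Ideal (MvPolynomial (Fin n) F)} {a : MvPolynomial (Fin n) F} {d : ℕ}
    (ha : a.IsHomogeneous d) (m : ℕ) :
      gp I (m + d) ⊓ (homogeneousSubmodule (Fin n) F m).map (LinearMap.mulLeft F a) =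
      (gp (col I a) m).map (LinearMap.mulLeft F a) := by
  ext f
  rw [Submodule.mem_inf, mem_gp]
  constructor
  · rintro ⟨⟨h1, h2⟩, h, hh, rfl⟩
    exact ⟨h, mem_gp.2 ⟨hh, mem_col.2 h2⟩, rfl⟩
  · rintro ⟨h, hh, rfl⟩
    rw [SetLike.mem_coe, mem_gp] at hh
    refine ⟨⟨?_, mem_col.1 hh.2⟩, h, hh.1, rfl⟩
    rw [add_comm m d]; exact ha.mul hh.1

lemma Hf_split {I : Ideal (MvPolynomial (Fin n) F)} (hI : HI I) {a : MvPolynomial (Fin n) F} {d : ℕ}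
    (ha : a.IsHomogeneous d) (ha0 : a ≠ 0) (m : ℕ) :
    Hf I (m + d) = Hf (I ⊔ Ideal.span {a}) (m + d) + Hf (col I a) m := by
  have inj : Function.Injective (LinearMap.mulLeft F a) := by
    intro x y h; exact mul_left_cancel₀ ha0 h
  have e := Submodule.finrank_sup_add_finrank_inf_eq (gp I (m + d))
    ((homogeneousSubmodule (Fin n) F m).map (LinearMap.mulLeft F a))
  rw [← gp_sup hI ha, gp_inf ha, (Submodule.equivMapOfInjective _ inj _).finrank_eq.symm, (Submodule.equivMapOfInjective _ inj _).finrank_eq.symm] at e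
  unfold Hf
  omega

lemma HI_prime {I : Ideal (MvPolynomial (Fin n) F)} (hI : HI I) (ht : I ≠ ⊤)
    (hp : ¬ I.IsPrime) : ∃ a b d e, a.IsHomogeneous d ∧ b.IsHomogeneous e ∧ a ∉ I ∧ b ∉ I ∧
      a * b ∈ I := by
  by_contra! hcon
  apply hp
  let _ := MvPolynomial.gradedAlgebra (σ := Fin n) (R := F)
  refine Ideal.IsHomogeneous.isPrime_of_homogeneous_mem_or_mem
    (𝒜 := homogeneousSubmodule (Fin n) F) ?_ ht ?_
  · intro i f hf
    have := hI f hf i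
    rw [← decomposition.decompose'_apply] at this
    exact this
  · rintro x y ⟨d, hx⟩ ⟨e, hy⟩ hxy
    by_contra! h
    exact hcon x y d e hx hy h.1 h.2 hxy

lemma lt_sup {I : Ideal (MvPolynomial (Fin n) F)} {a} (ha : a ∉ I) : I < I ⊔ Ideal.span {a} := by
  refine lt_of_le_of_ne le_sup_left fun h => ha ?_
  rw [h]; exact mem_sup_a.2 ⟨0, I.zero_mem, 1, by ring⟩

lemma le_col (I : Ideal (MvPolynomial (Fin n) F)) (a) : I ≤ col I a :=
  fun _ hf => mem_col.2 (I.mul_mem_left _ hf)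

lemma lt_col {I : Ideal (MvPolynomial (Fin n) F)} {a b} (hb : b ∉ I) (h : a * b ∈ I) :
    I < col I a := by
  refine lt_of_le_of_ne (le_col I a) fun hh => hb ?_
  rw [hh]; exact mem_col.2 h

lemma col_prime {P : Ideal (MvPolynomial (Fin n) F)} (hP : P.IsPrime) {a} (ha : a ∉ P) :
    col P a = P := by
  refine le_antisymm (fun f hf => ?_) (le_col P a)
  exact (hP.mem_or_mem (mem_col.1 hf)).resolve_left ha

lemma Hf_top (m : ℕ) : Hf (⊤ : Ideal (MvPolynomial (Fin n) F)) m = 0 := by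
  have : gp (⊤ : Ideal (MvPolynomial (Fin n) F)) m = homogeneousSubmodule (Fin n) F m := by
    ext f; simp [mem_gp]
  rw [Hf, this]; simp

lemma Hf_irr {P : Ideal (MvPolynomial (Fin n) F)} (h : ∀ j, X j ∈ P) (m : ℕ) (hm : 0 < m) :
    Hf P m = 0 := by
  have : gp P m = homogeneousSubmodule (Fin n) F m := by
    ext f
    rw [mem_gp, mem_homogeneousSubmodule]
    refine ⟨fun h => h.1, fun hf => ⟨hf, ?_⟩⟩
    rw [f.as_sum]
    refine Ideal.sum_mem _ fun v hv => ?_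
    have hd := hf.degree_eq_sum_deg_support hv
    have : v ≠ 0 := by
      rintro rfl; simp at hd; omega
    obtain ⟨j, hj⟩ := Finsupp.ne_iff.1 this
    refine P.mem_of_dvd ?_ (h j)
    refine (X_dvd_monomial).2 (Or.inr (by simpa using hj))
  rw [Hf, this]; simp

lemma HS (I : Ideal (MvPolynomial (Fin n) F)) (hI : HI I) : ∃ S, Ev S 0 (Hf I) := by
  induction I using IsNoetherian.induction with
  | hgt I ih =>
  by_cases ht : I = ⊤
  · subst ht
    exact ⟨0, Eventually.of_forall fun m => Hf_top m⟩
  by_cases hp : Ideal.IsPrime I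
  · by_cases hx : ∀ j, X j ∈ I
    · exact ⟨0, (eventually_gt_atTop 0).mono fun m hm => Hf_irr hx m hm⟩
    push Not at hx
    obtain ⟨j, hj⟩ := hx
    obtain ⟨S, hS⟩ := ih _ (lt_sup hj) (HI_sup hI (isHomogeneous_X F j))
    refine ⟨S + 1, ?_⟩
    unfold Ev
    rw [Function.iterate_succ_apply]
    have := (ev_shift 1).2 hS
    convert this using 1
    unfold Ev
    congr! 4
    funext m
    have := Hf_split hI (isHomogeneous_X F j) (X_ne_zero j) m
    rw [col_prime hp hj] at this
    simp only [Df]; omega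
  · obtain ⟨a, b, d, e, ha, hb, haI, hbI, hab⟩ := HI_prime hI ht hp
    obtain ⟨S1, h1⟩ := ih _ (lt_sup haI) (HI_sup hI ha)
    obtain ⟨S2, h2⟩ := ih _ (lt_col hbI hab) (HI_col hI ha)
    refine ⟨max S1 S2, ?_⟩
    rw [← ev_shift d]
    have := ev_add ((ev_shift d).2 (ev_mono (le_max_left S1 S2) h1)) (ev_mono (le_max_right S1 S2) h2)
    rw [add_zero] at this
    convert this using 1
    funext m
    exact Hf_split hI ha (by rintro rfl; exact haI I.zero_mem) m

lemma L1 (s : ℕ) (I : Ideal (MvPolynomial (Fin n) F)) (hI : HI I) (e : ℤ) (he : Odd e)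
    (hE : Ev s e (Hf I)) : ∃ P, I ≤ P ∧ P.IsPrime ∧ HI P ∧ ∃ e', Odd e' ∧ Ev s e' (Hf P) := by
  induction I using IsNoetherian.induction generalizing e with
  | hgt I ih =>
  by_cases ht : I = ⊤
  · subst ht
    have h0 : Ev 0 0 (Hf (⊤ : Ideal (MvPolynomial (Fin n) F))) :=
      Eventually.of_forall fun m => Hf_top m
    have := ev_uniq hE (ev_mono (Nat.zero_le s) h0)
    subst this
    simp at he
  by_cases hp : Ideal.IsPrime I
  · exact ⟨I, le_rfl, hp, hI, e, he, hE⟩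
  · obtain ⟨a, b, d, e, ha, hb, haI, hbI, hab⟩ := HI_prime hI ht hp
    have l1 := lt_sup haI
    have l2 := lt_col hbI hab
    obtain ⟨e1, h1⟩ := ev_of_le (Hf_nonneg _) (Hf_anti l1.le) hE (HS _ (HI_sup hI ha))
    obtain ⟨e2, h2⟩ := ev_of_le (Hf_nonneg _) (Hf_anti l2.le) hE (HS _ (HI_col hI ha))
    have h3 := ev_add ((ev_shift d).2 h1) h2
    have h4 := (ev_shift d).2 hE
    have : (fun m => Hf I (m + d)) = _ :=
      funext (Hf_split hI ha (by rintro rfl; exact haI I.zero_mem))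
    rw [this] at h4
    have h5 := ev_uniq h4 h3
    rw [h5] at he
    rcases Int.even_or_odd e1 with h | h
    · have : Odd e2 := by
        rcases Int.even_or_odd e2 with h' | h'
        · exact absurd he (Int.not_odd_iff_even.2 (h.add h'))
        · exact h'
      obtain ⟨P, hP, r⟩ := ih _ l2 (HI_col hI ha) e2 this h2
      exact ⟨P, l2.le.trans hP, r⟩
    · obtain ⟨P, hP, r⟩ := ih _ l1 (HI_sup hI ha) e1 h h1
      exact ⟨P, l1.le.trans hP, r⟩

/-- good prime of dimension `s+1`. -/
def Good (s : ℕ) (P : Ideal (MvPolynomial (Fin n) F)) : Prop :=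
  P.IsPrime ∧ HI P ∧ ∃ e, Odd e ∧ Ev s e (Hf P)

lemma L2 {s : ℕ} {P : Ideal (MvPolynomial (Fin n) F)} (hP : Good (s+1) P)
    {a : MvPolynomial (Fin n) F} {d : ℕ} (ha : a.IsHomogeneous d) (hd : Odd d) (haP : a ∉ P) :
    ∃ P', P ≤ P' ∧ a ∈ P' ∧ Good s P' := by
  obtain ⟨hp, hI, e, he, hE⟩ := hP
  have h1 := ev_diff hE d
  have h2 : Ev s (d * e) (Hf (P ⊔ Ideal.span {a})) := by
    rw [← ev_shift d]
    convert h1 using 1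
    funext m
    have := Hf_split hI ha (by rintro rfl; exact haP P.zero_mem) m
    rw [col_prime hp haP] at this
    omega
  obtain ⟨P', hP', r⟩ := L1 s _ (HI_sup hI ha) _ (((Int.odd_coe_nat d).2 hd).mul he) h2
  refine ⟨P', le_sup_left.trans hP', hP' (mem_sup_a.2 ⟨0, P.zero_mem, 1, by ring⟩), r⟩

lemma good_not_irr {s : ℕ} {P : Ideal (MvPolynomial (Fin n) F)} (hP : Good s P) :
    ∃ j, X j ∉ P := by
  by_contra! h
  obtain ⟨hp, hI, e, he, hE⟩ := hP
  have h0 : Ev 0 0 (Hf P) := (eventually_gt_atTop 0).mono fun m hm => Hf_irr h m hm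
  have := ev_uniq hE (ev_mono (Nat.zero_le s) h0)
  subst this
  simp at he

lemma good_zero {s : ℕ} {P : Ideal (MvPolynomial (Fin n) F)} (hP : Good s P) :
    ∃ P', P ≤ P' ∧ Good 0 P' := by
  induction s generalizing P with
  | zero => exact ⟨P, le_rfl, hP⟩
  | succ s ih =>
    obtain ⟨j, hj⟩ := good_not_irr hP
    obtain ⟨P1, h1, -, h3⟩ := L2 hP (isHomogeneous_X F j) odd_one hj
    obtain ⟨P2, h4, h5⟩ := ih h3
    exact ⟨P2, h1.trans h4, h5⟩

lemma finrank_hom (m : ℕ) : finrank F (homogeneousSubmodule (Fin (n+1)) F m) = (m + n).choose n := by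
  rw [homogeneousSubmodule_eq_finsupp_supported,
    (AddMonoidAlgebra.supportedEquivFinsupp _).finrank_eq]
  have hs : {d : Fin (n+1) →₀ ℕ | d.degree = m} =
      ((Finset.univ : Finset (Fin (n+1))).finsuppAntidiag m : Set _) := by
    ext d; simp [Finsupp.degree_eq_sum]
  rw [hs]
  rw [finrank_finsupp_self]
  simp only [Finset.coe_sort_coe, Fintype.card_coe]
  rw [Finset.card_finsuppAntidiag_nat_eq_choose]
  simp only [Finset.card_univ, Fintype.card_fin]
  rw [show n + 1 + m - 1 = m + n by omega, Nat.choose_symm_add]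

lemma good_bot : Good n (⊥ : Ideal (MvPolynomial (Fin (n+1)) F)) := by
  refine ⟨Ideal.isPrime_bot, ?_, 1, odd_one, ?_⟩
  · intro f hf m
    rw [Ideal.mem_bot] at hf ⊢
    rw [hf, map_zero]
  · convert ev_choose n using 1
    funext m
    have : gp (⊥ : Ideal (MvPolynomial (Fin (n+1)) F)) m = ⊥ := by
      ext f; rw [mem_gp]; simp only [Ideal.mem_bot, Submodule.mem_bot]
      exact ⟨fun h => h.2, fun h => ⟨h ▸ isHomogeneous_zero _ _ _, h⟩⟩
    rw [Hf, this, finrank_hom]; simp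

theorem exists_good (A : Fin n → MvPolynomial (Fin (n+1)) F) (d : Fin n → ℕ)
    (hA : ∀ i, (A i).IsHomogeneous (d i)) (hd : ∀ i, Odd (d i)) :
    ∃ P : Ideal (MvPolynomial (Fin (n+1)) F), Good 0 P ∧ ∀ i, A i ∈ P := by
  have key : ∀ j ≤ n, ∃ P : Ideal (MvPolynomial (Fin (n+1)) F), (∃ s, n ≤ s + j ∧ Good s P) ∧
      ∀ i : Fin n, i.1 < j → A i ∈ P := by
    intro j hj
    induction j with
    | zero => exact ⟨⊥, ⟨n, le_rfl, good_bot⟩, fun i hi => absurd hi (Nat.not_lt_zero _)⟩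
    | succ j ih =>
      obtain ⟨P, ⟨s, hs, hG⟩, hP⟩ := ih (by omega)
      by_cases hmem : A ⟨j, hj⟩ ∈ P
      · refine ⟨P, ⟨s, by omega, hG⟩, fun i hi => ?_⟩
        rcases Nat.lt_succ_iff_lt_or_eq.1 hi with h | h
        · exact hP i h
        · convert hmem
      · obtain ⟨s', rfl⟩ : ∃ s', s = s' + 1 := ⟨s - 1, by omega⟩
        obtain ⟨P', h1, h2, h3⟩ := L2 hG (hA _) (hd _) hmem
        refine ⟨P', ⟨s', by omega, h3⟩, fun i hi => ?_⟩
        rcases Nat.lt_succ_iff_lt_or_eq.1 hi with h | h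
        · exact h1 (hP i h)
        · convert h2
  obtain ⟨P, ⟨s, -, hG⟩, hP⟩ := key n le_rfl
  obtain ⟨P', h1, h2⟩ := good_zero hG
  exact ⟨P', h2, fun i => h1 (hP i i.2)⟩
end DQ


namespace DQ
open Filter Module
universe u
section
variable {F : Type u} [Field F] {n : ℕ}

lemma aeval_smul_hom {A : Type*} [CommRing A] [Algebra F A] {f : MvPolynomial (Fin n) F} {m : ℕ}
    (hf : f.IsHomogeneous m) (z : A) (v : Fin n → A) :
    aeval (fun i => z * v i) f = z ^ m * aeval v f := by
  rw [aeval_def, aeval_def, eval₂_eq, eval₂_eq, Finset.mul_sum]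
  refine Finset.sum_congr rfl fun d hd => ?_
  have := hf.degree_eq_sum_deg_support hd
  simp only [mul_pow, Finset.prod_mul_distrib, Finset.prod_pow_eq_pow_sum]
  rw [show m = ∑ i ∈ d.support, d i from this.symm ▸ rfl]
  ring

theorem exists_point {P : Ideal (MvPolynomial (Fin n) F)} (hG : Good 0 P) :
    ∃ (L : Type u) (_ : Field L) (_ : Algebra F L), FiniteDimensional F L ∧ Odd (finrank F L) ∧
      ∃ v : Fin n → L, v ≠ 0 ∧ ∀ f ∈ P, aeval v f = 0 := by
  obtain ⟨j, hj⟩ := good_not_irr hG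
  obtain ⟨hp, hI, e, he, hE⟩ := hG
  let K := FractionRing (MvPolynomial (Fin n) F ⧸ P)
  let ι : MvPolynomial (Fin n) F →ₐ[F] K :=
    (IsScalarTower.toAlgHom F (MvPolynomial (Fin n) F ⧸ P) K).comp (Ideal.Quotient.mkₐ F P)
  have hι : ∀ f, ι f = 0 ↔ f ∈ P := by
    intro f
    rw [← Ideal.Quotient.eq_zero_iff_mem]
    exact (FaithfulSMul.algebraMap_injective (MvPolynomial (Fin n) F ⧸ P) K).eq_iff' (map_zero _)
  set z : K := ι (X j) with hz
  have hz0 : z ≠ 0 := fun h => hj ((hι _).1 h)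
  let Φ : MvPolynomial (Fin n) F →ₐ[F] K := aeval (fun i => z⁻¹ * ι (X i))
  have hΦ : ∀ m f, f.IsHomogeneous m → Φ f = z⁻¹ ^ m * ι f := by
    intro m f hf
    have := aeval_smul_hom hf z⁻¹ (fun i => ι (X i))
    rw [show Φ f = _ from this]
    congr 1
    exact congrFun (congrArg DFunLike.coe (aeval_unique ι).symm) f
  have hΦ0 : ∀ m f, f.IsHomogeneous m → (Φ f = 0 ↔ f ∈ P) := by
    intro m f hf
    rw [hΦ m f hf, ← hι, mul_eq_zero]
    simp [hz0]
  have hΦP : ∀ f ∈ P, Φ f = 0 := by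
    intro f hf
    rw [← sum_homogeneousComponent f, map_sum]
    exact Finset.sum_eq_zero fun i _ =>
      (hΦ0 i _ (homogeneousComponent_isHomogeneous i f)).2 (hI f hf i)
  have hΦj : Φ (X j) = 1 := by
    rw [show Φ (X j) = z⁻¹ * z from aeval_X _ j]
    exact inv_mul_cancel₀ hz0
  let W : ℕ → Submodule F K := fun m => (homogeneousSubmodule (Fin n) F m).map Φ.toLinearMap
  have hWmono : Monotone W := by
    refine monotone_nat_of_le_succ fun m => ?_
    rintro _ ⟨f, hf, rfl⟩
    refine ⟨f * X j, IsHomogeneous.mul hf (isHomogeneous_X F j), ?_⟩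
    change Φ (f * X j) = Φ f
    rw [map_mul, hΦj, mul_one]
  have hWrank : ∀ m, (finrank F (W m) : ℤ) = Hf P m := by
    intro m
    have h1 := LinearMap.finrank_range_add_finrank_ker
      (Φ.toLinearMap.domRestrict (homogeneousSubmodule (Fin n) F m))
    rw [LinearMap.range_domRestrict] at h1
    have h2 : finrank F (LinearMap.ker
        (Φ.toLinearMap.domRestrict (homogeneousSubmodule (Fin n) F m))) = finrank F (gp P m) := by
      have : (LinearMap.ker
        (Φ.toLinearMap.domRestrict (homogeneousSubmodule (Fin n) F m))).map
          (homogeneousSubmodule (Fin n) F m).subtype = gp P m := by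
        ext f
        rw [mem_gp]
        constructor
        · rintro ⟨⟨g, hg⟩, hgk, rfl⟩
          exact ⟨hg, (hΦ0 m g hg).1 hgk⟩
        · rintro ⟨hf, hfP⟩
          exact ⟨⟨f, hf⟩, (hΦ0 m f hf).2 hfP, rfl⟩
      rw [← this]
      exact (Submodule.equivMapOfInjective _ (Submodule.subtype_injective _) _).finrank_eq
    rw [h2] at h1
    unfold Hf
    change (finrank F (Submodule.map Φ.toLinearMap (homogeneousSubmodule (Fin n) F m)) : ℤ) = _
    omega
  obtain ⟨m0, hm0⟩ := eventually_atTop.1 hE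
  simp only [Function.iterate_zero, id] at hm0
  have hWfin : ∀ m, FiniteDimensional F (W m) := fun m => inferInstance
  have hWeq : ∀ m, m0 ≤ m → W m0 = W m := by
    intro m hm
    refine Submodule.eq_of_le_of_finrank_eq (hWmono hm) ?_
    have := hWrank m0; have h2 := hWrank m
    rw [hm0 _ le_rfl] at this; rw [hm0 _ hm] at h2
    omega
  have hrange : Subalgebra.toSubmodule Φ.range = W m0 := by
    ext x
    constructor
    · rintro ⟨f, rfl⟩
      change Φ f ∈ W m0
      rw [← sum_homogeneousComponent f, map_sum]
      refine Submodule.sum_mem _ fun i _ => ?_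
      rw [hWeq (max i m0) (le_max_right _ _)]
      exact hWmono (le_max_left i m0) ⟨_, homogeneousComponent_mem _ _, rfl⟩
    · rintro ⟨f, -, rfl⟩
      exact ⟨f, rfl⟩
  have hfin : FiniteDimensional F Φ.range := by
    have : FiniteDimensional F (Subalgebra.toSubmodule Φ.range) := by rw [hrange]; infer_instance
    exact this
  have hrk : finrank F Φ.range = finrank F (W m0) := by
    rw [← hrange]; rfl
  have hodd : Odd (finrank F Φ.range) := by
    rw [hrk, ← Int.odd_coe_nat, hWrank, hm0 _ le_rfl]; exact he
  have hv : ∀ f ∈ P, aeval (R := F) (fun i => Φ.rangeRestrict (X i)) f = 0 := by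
    intro f hf
    have h1 : aeval (R := F) (fun i => Φ.rangeRestrict (X i)) = Φ.rangeRestrict :=
      (aeval_unique Φ.rangeRestrict).symm
    rw [h1]
    exact Subtype.ext (hΦP f hf)
  have hv0 : Φ.rangeRestrict (X j) ≠ 0 := by
    intro h
    have := congrArg Subtype.val h
    change Φ (X j) = 0 at this
    rw [hΦj] at this
    exact one_ne_zero this
  let instL : Field Φ.range := fieldOfFiniteDimensional F Φ.range
  exact ⟨Φ.range, instL, inferInstance, hfin, hodd, fun i => Φ.rangeRestrict (X i),
    fun h => hv0 (congrFun h j), hv⟩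
end
end DQ


namespace DQ
open Module
universe u

def Aniso {F : Type u} [Field F] {r : ℕ} (c : Fin r → F) : Prop :=
  ∀ v : Fin r → F, ∑ i, c i * v i ^ 2 = 0 → v = 0

section
open Polynomial
variable {F : Type u} [Field F] {r : ℕ}

noncomputable def qp (c : Fin r → F) (f : Fin r → F[X]) : F[X] := ∑ i, Polynomial.C (c i) * f i ^ 2

lemma qp_deg {c : Fin r → F} (hc : Aniso c) {f : Fin r → F[X]} (hf : f ≠ 0) :
    ∃ d, (∃ i, (f i).natDegree = d ∧ f i ≠ 0) ∧ (∀ i, (f i).natDegree ≤ d) ∧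
      (qp c f).natDegree = 2 * d ∧ qp c f ≠ 0 := by
  classical
  obtain ⟨i0, hi0⟩ := Function.ne_iff.1 hf
  let s := Finset.univ.filter fun i => f i ≠ 0
  have hs : s.Nonempty := ⟨i0, by simpa [s] using hi0⟩
  obtain ⟨j, hj, hmax⟩ := s.exists_max_image (fun i => (f i).natDegree) hs
  have hj0 : f j ≠ 0 := by simpa [s] using hj
  have hle : ∀ i, (f i).natDegree ≤ (f j).natDegree := by
    intro i
    by_cases h : f i = 0
    · simp [h]
    · exact hmax i (by simpa [s] using h)
  set d := (f j).natDegree with hd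
  have hcoef : (qp c f).coeff (2 * d) = ∑ i, c i * (f i).coeff d ^ 2 := by
    rw [qp, finsetSum_coeff]
    refine Finset.sum_congr rfl fun i _ => ?_
    rw [Polynomial.coeff_C_mul, coeff_pow_of_natDegree_le (hle i)]
  have hne : (qp c f).coeff (2 * d) ≠ 0 := by
    rw [hcoef]
    intro h
    have := congrFun (hc (fun i => (f i).coeff d) h) j
    simp only [Pi.zero_apply] at this
    rw [hd, coeff_natDegree, leadingCoeff_eq_zero] at this
    exact hj0 this
  refine ⟨d, ⟨j, rfl, hj0⟩, hle, ?_, fun h => hne (by rw [h, Polynomial.coeff_zero])⟩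
  refine le_antisymm ?_ (le_natDegree_of_ne_zero hne)
  rw [qp]
  refine natDegree_sum_le_of_forall_le _ _ fun i _ => ?_
  refine (natDegree_C_mul_le _ _).trans (natDegree_pow_le.trans ?_)
  have := hle i
  omega

lemma odd_factor (g : F[X]) (hg : Odd g.natDegree) : ∃ p, Irreducible p ∧ p ∣ g ∧ Odd p.natDegree := by
  induction g using WfDvdMonoid.induction_on_irreducible with
  | zero => simp at hg
  | unit u hu => rw [natDegree_eq_zero_of_isUnit hu] at hg; simp at hg
  | mul a i ha hi ih =>
    rw [natDegree_mul hi.ne_zero ha, Nat.odd_add] at hg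
    by_cases h : Odd i.natDegree
    · exact ⟨i, hi, dvd_mul_right _ _, h⟩
    · have : Odd a.natDegree := by
        rw [← Nat.not_even_iff_odd]; exact fun h' => h (hg.2 h')
      obtain ⟨p, h1, h2, h3⟩ := ih this
      exact ⟨p, h1, h2.mul_left _, h3⟩

lemma springer_aux {c : Fin r → F} (hc : Aniso c) (N : ℕ) : ∀ p : F[X], p.natDegree = N →
    Irreducible p → Odd p.natDegree → ∀ v : Fin r → F[X], p ∣ qp c v → ∀ i, p ∣ v i := by
  induction N using Nat.strong_induction_on with
  | _ N ih =>
  intro p hpN hp hodd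
  -- small vectors
  have small : ∀ d, ∀ v : Fin r → F[X], (∀ i, (v i).natDegree ≤ d) → d < N → p ∣ qp c v → v = 0 := by
    intro d
    induction d using Nat.strong_induction_on with
    | _ d ihd =>
    intro v hv hdN hpv
    by_contra hv0
    obtain ⟨d', ⟨j, hj, hj0⟩, hle, hdeg, hne⟩ := qp_deg hc hv0
    have hd'd : d' ≤ d := hj ▸ hv j
    obtain ⟨g, hg⟩ := hpv
    have hg0 : g ≠ 0 := by rintro rfl; rw [mul_zero] at hg; exact hne hg
    have hdg : p.natDegree + g.natDegree = 2 * d' := by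
      rw [← hdeg, hg, natDegree_mul hp.ne_zero hg0]
    have hgodd : Odd g.natDegree := by
      rcases Nat.even_or_odd g.natDegree with h | h
      · have := hodd.add_even h
        rw [hdg] at this
        exact absurd this (by simp)
      · exact h
    obtain ⟨p', hp', hp'g, hp'odd⟩ := odd_factor g hgodd
    have hlt : p'.natDegree < N := by
      have := natDegree_le_of_dvd hp'g hg0
      omega
    have hdiv := ih _ hlt p' rfl hp' hp'odd v (hg ▸ hp'g.mul_left p)
    choose w hw using hdiv
    have hp'pos : 0 < p'.natDegree := hp'odd.pos
    have hqw : qp c v = p' ^ 2 * qp c w := by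
      rw [qp, qp, Finset.mul_sum]
      refine Finset.sum_congr rfl fun i _ => ?_
      rw [hw i]; ring
    have hpw : p ∣ qp c w := by
      have : p ∣ p' ^ 2 * qp c w := by rw [← hqw, hg]; exact dvd_mul_right _ _
      rcases hp.prime.dvd_or_dvd this with h | h
      · have := natDegree_le_of_dvd (hp.prime.dvd_of_dvd_pow h) hp'.ne_zero
        omega
      · exact h
    have hwj : (v j).natDegree = p'.natDegree + (w j).natDegree := by
      have : w j ≠ 0 := by intro h; apply hj0; rw [hw j, h, mul_zero]
      rw [hw j, natDegree_mul hp'.ne_zero this]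
    have hwd : ∀ i, (w i).natDegree ≤ d' - p'.natDegree := by
      intro i
      by_cases h : w i = 0
      · simp [h]
      · have := hle i
        rw [hw i, natDegree_mul hp'.ne_zero h] at this
        omega
    have hw0 := ihd (d' - p'.natDegree) (by omega) w hwd (by omega) hpw
    apply hj0
    rw [hw j, hw0]; simp
  intro v hpv i
  have hNpos : 0 < N := by rw [← hpN]; exact hodd.pos
  have hmod : (fun i => v i % p) = 0 := by
    refine small (N - 1) _ ?_ (by omega) ?_
    · intro i
      have := natDegree_mod_lt (v i) (q := p) (by omega)
      omega
    · have : p ∣ qp c v - qp c (fun i => v i % p) := by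
        rw [qp, qp, ← Finset.sum_sub_distrib]
        refine Finset.dvd_sum fun i _ => ?_
        rw [← mul_sub, sq_sub_sq]
        refine Dvd.dvd.mul_left (Dvd.dvd.mul_left ?_ _) _
        exact ⟨v i / p, by linear_combination -(EuclideanDomain.div_add_mod (v i) p)⟩
      exact (dvd_sub_right hpv).1 this
  exact (EuclideanDomain.mod_eq_zero).1 (congrFun hmod i)

lemma springer (N : ℕ) : ∀ (F L : Type u) [Field F] [Field L] [Algebra F L] [FiniteDimensional F L]
    (c : Fin r → F), finrank F L = N → Odd N → Aniso c → Aniso (fun i => algebraMap F L (c i)) := by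
  induction N using Nat.strong_induction_on with
  | _ N ih =>
  intro F L _ _ _ _ c hN hodd hc
  by_cases hx : ∃ x : L, x ∉ (algebraMap F L).range
  · obtain ⟨x, hx⟩ := hx
    let K := IntermediateField.adjoin F {x}
    have hint : IsIntegral F x := IsIntegral.of_finite F x
    have hmul : finrank F K * finrank K L = N := hN ▸ finrank_mul_finrank F K L
    have hdeg : finrank F K = (minpoly F x).natDegree := IntermediateField.adjoin.finrank hint
    have h1 : finrank F K ≠ 1 := by
      intro h
      apply hx
      rw [hdeg, ← minpoly.natDegree_eq_one_iff] at *
      exact h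
    have hNpos : 0 < N := hodd.pos
    rw [← hmul] at hodd
    obtain ⟨ho1, ho2⟩ := Nat.odd_mul.1 hodd
    have hK : Aniso (fun i => algebraMap F K (c i)) := by
      intro v hv
      have : ∀ i, ∃ w : F[X], aeval x w = (v i : L) := by
        intro i
        have h := (v i).2
        rw [← IntermediateField.mem_toSubalgebra,
          IntermediateField.adjoin_simple_toSubalgebra_of_isAlgebraic hint.isAlgebraic,
          Algebra.adjoin_singleton_eq_range_aeval] at h
        exact h
      choose w hw using this
      have hdvd : minpoly F x ∣ qp c w := by
        apply minpoly.dvd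
        have := congrArg (algebraMap K L) hv
        simp only [map_sum, map_mul, map_pow, map_zero] at this
        rw [qp, map_sum, ← this]
        refine Finset.sum_congr rfl fun i _ => ?_
        simp only [map_mul, map_pow, hw, Polynomial.aeval_C]
        rfl
      have := springer_aux hc _ _ rfl (minpoly.irreducible hint) (hdeg ▸ ho1) w hdvd
      funext i
      apply Subtype.ext
      rw [← hw i]
      obtain ⟨g, hg⟩ := this i
      rw [hg, map_mul, minpoly.aeval]; simp
    have hlt : finrank K L < N := by
      rw [← hmul]
      have a1 := ho1.pos
      have a2 := ho2.pos
      nlinarith [show 2 ≤ finrank F K by omega]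
    have := ih _ hlt K L (fun i => algebraMap F K (c i)) rfl ho2 hK
    simpa only [← IsScalarTower.algebraMap_apply F K L] using this
  · push Not at hx
    intro v hv
    choose w hw using fun i => hx (v i)
    have : ∑ i, c i * w i ^ 2 = 0 := by
      apply (algebraMap F L).injective
      simp only [map_sum, map_mul, map_pow, map_zero, hw]
      exact hv
    have := hc w this
    funext i
    rw [← hw i, this]; simp

lemma exists_generic (k : Type u) [Field k] (r : ℕ) :
    ∃ (F : Type u) (_ : Field F) (_ : Algebra k F) (c : Fin r → F), Aniso c := by
  induction r with
  | zero => exact ⟨k, inferInstance, inferInstance, fun i => i.elim0, fun v _ => funext fun i => i.elim0⟩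
  | succ r ih =>
    obtain ⟨F, _, _, c, hc⟩ := ih
    refine ⟨FractionRing F[X], inferInstance,
      ((algebraMap F[X] (FractionRing F[X])).comp ((Polynomial.C).comp (algebraMap k F))).toAlgebra,
      fun i => algebraMap F[X] _ ((Fin.cons Polynomial.X (fun i => Polynomial.C (c i)) : Fin (r+1) → F[X]) i), ?_⟩
    intro v hv
    obtain ⟨b, hb⟩ := IsLocalization.exist_integer_multiples_of_finite (nonZeroDivisors F[X]) v
    choose w hw using hb
    have hinj := IsFractionRing.injective F[X] (FractionRing F[X])
    have hb0 : algebraMap F[X] (FractionRing F[X]) b ≠ 0 := by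
      rw [Ne, map_eq_zero_iff _ hinj]; exact nonZeroDivisors.ne_zero b.2
    have hw' : ∀ i, algebraMap F[X] (FractionRing F[X]) (w i) = algebraMap F[X] (FractionRing F[X]) b * v i := by
      intro i; rw [hw i, Algebra.smul_def]
    have hsum : Polynomial.X * w 0 ^ 2 + qp c (fun i => w i.succ) = 0 := by
      apply hinj
      have : ∑ i, algebraMap F[X] (FractionRing F[X]) ((Fin.cons Polynomial.X (fun i => Polynomial.C (c i)) : Fin (r+1) → F[X]) i) * (algebraMap F[X] (FractionRing F[X]) (w i))^2 = 0 := by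
        rw [← mul_zero (algebraMap F[X] (FractionRing F[X]) b ^ 2), ← hv, Finset.mul_sum]
        refine Finset.sum_congr rfl fun i _ => ?_
        rw [hw' i]; ring
      rw [map_zero, ← this, Fin.sum_univ_succ]
      simp [qp]
    have hw0 : w = 0 := by
      by_cases h : (fun i : Fin r => w i.succ) = 0
      · have h0 : w 0 = 0 := by
          rw [h] at hsum
          have : qp c (0 : Fin r → F[X]) = 0 := by simp [qp]
          rw [this, add_zero] at hsum
          simpa using hsum
        funext i
        refine Fin.cases h0 (fun i => congrFun h i) i
      · exfalso
        obtain ⟨d, -, -, hd, hne⟩ := qp_deg hc h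
        have heq : qp c (fun i => w i.succ) = - (Polynomial.X * w 0 ^ 2) := by
          linear_combination hsum
        have hw00 : w 0 ≠ 0 := by
          intro h0; rw [h0] at heq; apply hne; rw [heq]; simp
        rw [heq, natDegree_neg, natDegree_mul Polynomial.X_ne_zero (pow_ne_zero 2 hw00), natDegree_pow, natDegree_X] at hd
        omega
    funext i
    have := hw' i
    rw [hw0] at this
    simp only [Pi.zero_apply, map_zero] at this
    exact (mul_eq_zero.1 this.symm).resolve_left hb0
end
end DQ

namespace DQ
open Module
universe u

section
variable {F : Type u} [Field F] {n : ℕ}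

lemma sum_comp (g : MvPolynomial (Fin n) F) (M : ℕ) (hM : g.totalDegree < M) :
    ∑ i ∈ Finset.range M, homogeneousComponent i g = g := by
  conv_rhs => rw [← sum_homogeneousComponent g]
  symm
  refine Finset.sum_subset (Finset.range_mono hM) fun i _ hi => ?_
  apply homogeneousComponent_eq_zero
  simp at hi; omega

lemma sum_pair {A : Type*} [AddCommMonoid A] (f : ℕ → A) (M : ℕ) :
    ∑ i ∈ Finset.range (2 * M), f i = ∑ k ∈ Finset.range M, (f (2 * k) + f (2 * k + 1)) := by
  induction M with
  | zero => simp
  | succ M ih =>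
    rw [show 2 * (M + 1) = 2 * M + 1 + 1 by ring, Finset.sum_range_succ, Finset.sum_range_succ, ih,
      Finset.sum_range_succ, add_assoc]

theorem core (c : Fin (n+1) → F) (hc : Aniso c) (g : Fin n → MvPolynomial (Fin (n+1)) F) :
    ∃ (Ω : Type u) (_ : Field Ω) (_ : Algebra F Ω) (μ : Fin (n+1) → Ω),
      ∑ i, algebraMap F Ω (c i) * μ i ^ 2 = 1 ∧
      ∀ i, aeval μ (g i) = aeval (fun j => - μ j) (g i) := by
  let q : MvPolynomial (Fin (n+1)) F := ∑ i, C (c i) * X i ^ 2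
  have hq : q.IsHomogeneous 2 :=
    IsHomogeneous.sum _ _ _ fun i _ => isHomogeneous_C_mul_X_pow (c i) i 2
  let A : Fin n → MvPolynomial (Fin (n+1)) F := fun i =>
    ∑ k ∈ Finset.range ((g i).totalDegree + 1),
      homogeneousComponent (2 * k + 1) (g i) * q ^ ((g i).totalDegree - k)
  have hA : ∀ i, (A i).IsHomogeneous (2 * (g i).totalDegree + 1) := by
    intro i
    refine IsHomogeneous.sum _ _ _ fun k hk => ?_
    have := (homogeneousComponent_isHomogeneous (2 * k + 1) (g i)).mul
      (hq.pow ((g i).totalDegree - k))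
    convert this using 1
    simp at hk; omega
  obtain ⟨P, hG, hP⟩ := exists_good A _ hA (fun i => ⟨_, rfl⟩)
  obtain ⟨L, _, _, hfin, hodd, v, hv0, hv⟩ := exists_point hG
  have hL : Aniso (fun i => algebraMap F L (c i)) := springer _ F L c rfl hodd hc
  have hQ : aeval v q ≠ 0 := by
    intro h
    apply hv0
    apply hL v
    simpa [q] using h
  let Ω := AlgebraicClosure L
  obtain ⟨s, hs⟩ := IsAlgClosed.exists_pow_nat_eq (algebraMap L Ω (aeval v q)) (n := 2) (by norm_num)
  have hs0 : s ≠ 0 := by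
    rintro rfl
    rw [zero_pow (by norm_num)] at hs
    exact hQ ((map_eq_zero_iff _ (algebraMap L Ω).injective).1 hs.symm)
  let μ : Fin (n+1) → Ω := fun j => s⁻¹ * algebraMap L Ω (v j)
  have hvμ : ∀ f : MvPolynomial (Fin (n+1)) F, algebraMap L Ω (aeval v f) =
      aeval (fun j => s * μ j) f := by
    intro f
    have : (fun j => s * μ j) = fun j => algebraMap L Ω (v j) := by
      funext j; simp only [μ]; rw [mul_inv_cancel_left₀ hs0]
    rw [this]
    exact (aeval_algebraMap_apply Ω v f).symm
  have hqμ : aeval μ q = 1 := by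
    have := hvμ q
    rw [← hs, aeval_smul_hom hq] at this
    have h2 : s ^ 2 ≠ 0 := pow_ne_zero 2 hs0
    exact (mul_left_cancel₀ h2 (by rw [mul_one]; exact this)).symm
  refine ⟨Ω, inferInstance, inferInstance, μ, ?_, ?_⟩
  · simpa [q] using hqμ
  · intro i
    have h1 := hvμ (A i)
    rw [hv _ (hP i), map_zero, aeval_smul_hom (hA i)] at h1
    have h2 : aeval μ (A i) = 0 := (mul_eq_zero.1 h1.symm).resolve_left (pow_ne_zero _ hs0)
    simp only [A, map_sum, map_mul, map_pow, hqμ, one_pow, mul_one] at h2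
    have hneg : ∀ m, aeval (fun j => - μ j) (homogeneousComponent m (g i)) =
        (-1) ^ m * aeval μ (homogeneousComponent m (g i)) := by
      intro m
      have e : (fun j => - μ j) = fun j => (-1 : Ω) * μ j := by funext j; ring
      rw [e]
      exact aeval_smul_hom (homogeneousComponent_isHomogeneous m (g i)) _ _
    rw [← sum_comp (g i) (2 * ((g i).totalDegree + 1)) (by omega), map_sum, map_sum,
      sum_pair, sum_pair, Finset.sum_add_distrib, Finset.sum_add_distrib]
    congr 1
    · refine Finset.sum_congr rfl fun k _ => ?_
      rw [hneg, Even.neg_one_pow ⟨k, by ring⟩, one_mul]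
    · rw [h2]
      symm
      rw [← neg_zero, ← h2, ← Finset.sum_neg_distrib]
      refine Finset.sum_congr rfl fun k _ => ?_
      rw [hneg, Odd.neg_one_pow ⟨k, by ring⟩, neg_one_mul]
end

section
variable {k F Ω : Type u} [Field k] [Field F] [Field Ω] [Algebra k F] [Algebra F Ω] {r : ℕ}

noncomputable def sub (k : Type u) {F : Type u} [Field k] [Field F] [Algebra k F] {r : ℕ}
    (c : Fin r → F) : MvPolynomial (Fin r ⊕ Fin r) k →+* MvPolynomial (Fin r) F :=
  eval₂Hom (C.comp (algebraMap k F)) (Sum.elim X (fun j => C (c j) * X j))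

noncomputable def phi (k : Type u) [Field k] [Algebra k F] (c : Fin r → F) (μ : Fin r → Ω)
    (h : ∑ i, algebraMap F Ω (c i) * μ i ^ 2 = 1) : Tring k r →+* Ω :=
  Ideal.Quotient.lift (hypIdeal k r) (((aeval μ : _ →ₐ[F] Ω) : _ →+* Ω).comp (sub k c)) (by
    intro a ha
    have : hypIdeal k r ≤ RingHom.ker (((aeval μ : _ →ₐ[F] Ω) : _ →+* Ω).comp (sub k c)) := by
      rw [Ideal.span_le, Set.singleton_subset_iff, SetLike.mem_coe, RingHom.mem_ker]
      simp only [sub, map_sub, map_sum, map_mul, map_one, RingHom.comp_apply, eval₂Hom_X',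
        Sum.elim_inl, Sum.elim_inr, RingHom.coe_coe, aeval_X, aeval_C]
      rw [← h, sub_eq_zero]
      exact Finset.sum_congr rfl fun i _ => by ring
    exact this ha)

lemma phi_mk (c : Fin r → F) (μ : Fin r → Ω) (h) (f) :
    phi k c μ h (Ideal.Quotient.mk _ f) = aeval μ (sub k c f) := rfl

lemma phi_sigma (c : Fin r → F) (μ : Fin r → Ω) (h) (h')
    (σ : Tring k r ≃ₐ[k] Tring k r)
    (hσx : ∀ j, σ (Tx k r j) = - Tx k r j) (hσy : ∀ j, σ (Ty k r j) = - Ty k r j) (x : Tring k r) :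
    phi k c μ h (σ x) = phi k c (fun j => - μ j) h' x := by
  have : (phi k c μ h).comp (σ : Tring k r →+* Tring k r) = phi k c (fun j => - μ j) h' := by
    apply Ideal.Quotient.ringHom_ext
    apply MvPolynomial.ringHom_ext
    · intro a
      have h1 : σ (Ideal.Quotient.mk (hypIdeal k r) (C a)) = Ideal.Quotient.mk (hypIdeal k r) (C a) :=
        σ.commutes a
      change phi k c μ h (σ (Ideal.Quotient.mk (hypIdeal k r) (C a))) = _
      rw [h1]
      change aeval μ (sub k c (C a)) = aeval _ (sub k c (C a))
      simp [sub]
    · rintro (j | j)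
      · change phi k c μ h (σ (Tx k r j)) = phi k c _ h' (Tx k r j)
        rw [hσx, map_neg, phi_mk, phi_mk]
        simp [sub]
      · change phi k c μ h (σ (Ty k r j)) = phi k c _ h' (Ty k r j)
        rw [hσy, map_neg, phi_mk, phi_mk]
        simp [sub]
  exact congrFun (congrArg DFunLike.coe this) x
end
end DQ

/-- Let `k` be a field of characteristic `≠ 2` containing a square root
of `−1`, let `r ≥ 1`, `T = k[x,y]/(Σ xᵢyᵢ − 1)`, `σ` the `k`-algebra automorphism of `T`
negating all variables, and `R = T^σ` the fixed subring. Then `T` cannot be generated as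
an `R`-algebra by fewer than `r` elements: any `r − 1` elements of `T` generate a proper
`R`-subalgebra. -/
theorem deleted_quadric_algebra_needs_r_generators
    (k : Type u) [Field k] (hchar : (2 : k) ≠ 0) (i : k) (hi : i ^ 2 = -1)
    (r : ℕ) (hr : 1 ≤ r)
    (σ : Tring k r ≃ₐ[k] Tring k r)
    (hσx : ∀ j, σ (Tx k r j) = - Tx k r j) (hσy : ∀ j, σ (Ty k r j) = - Ty k r j)
    (t : Fin (r - 1) → Tring k r) :
    Algebra.adjoin (↥(AlgHom.equalizer σ.toAlgHom (AlgHom.id k (Tring k r))))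
      (Set.range t) ≠ ⊤ := by
  intro htop
  obtain ⟨n, rfl⟩ : ∃ n, r = n + 1 := ⟨r - 1, by omega⟩
  obtain ⟨F, _, _, c, hc⟩ := DQ.exists_generic k (n + 1)
  choose f hf using fun i => Ideal.Quotient.mk_surjective (t i)
  obtain ⟨Ω, _, _, μ, hμ, hg⟩ := DQ.core c hc (fun i => DQ.sub k c (f i))
  have hμ' : ∑ i, algebraMap F Ω (c i) * (- μ i) ^ 2 = 1 := by simpa using hμ
  have key : ∀ x : Tring k (n + 1), DQ.phi k c μ hμ x = DQ.phi k c (fun j => - μ j) hμ' x := by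
    intro x
    have hx : x ∈ Algebra.adjoin
        (↥(AlgHom.equalizer σ.toAlgHom (AlgHom.id k (Tring k (n + 1))))) (Set.range t) := by
      rw [htop]; exact Algebra.mem_top
    induction hx using Algebra.adjoin_induction with
    | mem x hx =>
      obtain ⟨i, rfl⟩ := hx
      rw [← hf i, DQ.phi_mk, DQ.phi_mk]
      exact hg i
    | algebraMap y =>
      have hy : σ (y : Tring k (n + 1)) = y := y.2
      rw [← DQ.phi_sigma c μ hμ hμ' σ hσx hσy]
      exact congrArg _ hy.symm
    | add x y _ _ hx hy => rw [map_add, map_add, hx, hy]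
    | mul x y _ _ hx hy => rw [map_mul, map_mul, hx, hy]
  have h2 : (2 : Ω) ≠ 0 := by
    have : ((algebraMap F Ω).comp (algebraMap k F)) 2 ≠ 0 := by
      rw [Ne, map_eq_zero_iff _ (RingHom.injective _)]; exact hchar
    rw [map_ofNat] at this
    exact this
  have hz : μ = 0 := by
    funext j
    have := key (Tx k (n + 1) j)
    rw [DQ.phi_mk, DQ.phi_mk] at this
    simp only [DQ.sub, eval₂Hom_X', Sum.elim_inl, aeval_X] at this
    have h3 : 2 * μ j = 0 := by linear_combination this
    exact (mul_eq_zero.1 h3).resolve_left h2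
  rw [hz] at hμ
  simp at hμ
end

section
/- Let k be a field of characteristic different from 2, and let L = k[x, y][(x−y)^{−1}] be the localization of the polynomial ring k[x, y] at the element x − y. Let τ be the k-algebra automorphism of L induced by swapping x and y. Then the fixed subring L^τ = {f ∈ L : τ(f) = f} is equal to the k-subalgebra of L generated by the three elements x + y, (x − y)², and (x − y)^{−2}. -/
open MvPolynomial

/-- The localization `L = k[x, y][(x − y)⁻¹]`, with `x = X 0` and `y = X 1`. -/
noncomputable abbrev Lring (k : Type u) [Field k] :=
  Localization.Away (X 0 - X 1 : MvPolynomial (Fin 2) k)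

/-- The image of `x` in `L`. -/
noncomputable abbrev Lx (k : Type u) [Field k] : Lring k :=
  algebraMap (MvPolynomial (Fin 2) k) (Lring k) (X 0)

/-- The image of `y` in `L`. -/
noncomputable abbrev Ly (k : Type u) [Field k] : Lring k :=
  algebraMap (MvPolynomial (Fin 2) k) (Lring k) (X 1)

/-- The element `(x − y)⁻¹` of `L`. -/
noncomputable abbrev LinvXsubY (k : Type u) [Field k] : Lring k :=
  IsLocalization.Away.invSelf (X 0 - X 1 : MvPolynomial (Fin 2) k)

/-- Let `k` be a field of characteristic `≠ 2` and
`L = k[x, y][(x − y)⁻¹]`. Let `τ` be the `k`-algebra automorphism of `L` induced by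
swapping `x` and `y`. Then the fixed subring `L^τ` is the `k`-subalgebra of `L` generated
by `x + y`, `(x − y)²` and `(x − y)⁻²`. -/
theorem fixed_subring_of_swap_on_localized_plane
    (k : Type u) [Field k] (hchar : (2 : k) ≠ 0)
    (τ : Lring k ≃ₐ[k] Lring k) (hx : τ (Lx k) = Ly k) (hy : τ (Ly k) = Lx k) :
    AlgHom.equalizer τ.toAlgHom (AlgHom.id k (Lring k)) =
      Algebra.adjoin k
        {Lx k + Ly k, (Lx k - Ly k) ^ 2, (LinvXsubY k) ^ 2} := by
  have hdi : (Lx k - Ly k) * LinvXsubY k = 1 := by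
    have h := IsLocalization.Away.mul_invSelf (S := Lring k)
      (X 0 - X 1 : MvPolynomial (Fin 2) k)
    rw [map_sub] at h
    exact h
  have key : ∀ x y i : Lring k, Lx k = x → Ly k = y → LinvXsubY k = i →
      AlgHom.equalizer τ.toAlgHom (AlgHom.id k (Lring k)) =
      Algebra.adjoin k {x + y, (x - y) ^ 2, i ^ 2} := by
    intro x y i ex ey ei
    rw [ex, ey, ei] at hdi
    rw [ex, ey] at hx hy
    have hti : τ i = -i := by
      have h := congrArg τ hdi
      rw [map_mul, map_sub, hx, hy, map_one] at h
      linear_combination (-i) * h - τ i * hdi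
    set A := Algebra.adjoin k {x + y, (x - y) ^ 2, i ^ 2} with hA
    have m1 : x + y ∈ A := Algebra.subset_adjoin (by simp)
    have m2 : (x - y) ^ 2 ∈ A := Algebra.subset_adjoin (by simp)
    have m3 : i ^ 2 ∈ A := Algebra.subset_adjoin (by simp)
    have hle : A ≤ AlgHom.equalizer τ.toAlgHom (AlgHom.id k (Lring k)) := by
      rw [hA]
      refine Algebra.adjoin_le ?_
      intro z hz
      change τ z = z
      rcases hz with rfl | rfl | rfl
      · rw [map_add, hx, hy, add_comm]
      · rw [map_pow, map_sub, hx, hy]; ring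
      · rw [map_pow, hti]; ring
    have h2 : algebraMap k (Lring k) 2⁻¹ * 2 = 1 := by
      rw [← map_ofNat (algebraMap k (Lring k)) 2, ← map_mul, inv_mul_cancel₀ hchar, map_one]
    have mh : algebraMap k (Lring k) 2⁻¹ ∈ A := A.algebraMap_mem _
    generalize algebraMap k (Lring k) 2⁻¹ = h at h2 mh
    have hmul : ∀ f g : Lring k, (∃ a ∈ A, ∃ b ∈ A, f = a + (x - y) * b) →
        (∃ a ∈ A, ∃ b ∈ A, g = a + (x - y) * b) →
        ∃ a ∈ A, ∃ b ∈ A, f * g = a + (x - y) * b := by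
      rintro _ _ ⟨a, ha, b, hb, rfl⟩ ⟨c, hc, d, hd, rfl⟩
      exact ⟨a * c + (x - y) ^ 2 * (b * d),
        add_mem (mul_mem ha hc) (mul_mem m2 (mul_mem hb hd)),
        a * d + b * c, add_mem (mul_mem ha hd) (mul_mem hb hc), by ring⟩
    have hpol : ∀ p : MvPolynomial (Fin 2) k, ∃ a ∈ A, ∃ b ∈ A,
        algebraMap (MvPolynomial (Fin 2) k) (Lring k) p = a + (x - y) * b := by
      intro p
      induction p using MvPolynomial.induction_on with
      | C c =>
        refine ⟨algebraMap k (Lring k) c, A.algebraMap_mem _, 0, zero_mem _, ?_⟩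
        rw [mul_zero, add_zero, IsScalarTower.algebraMap_apply k (MvPolynomial (Fin 2) k) (Lring k)]
        rfl
      | add p q hp hq =>
        obtain ⟨a, ha, b, hb, e⟩ := hp
        obtain ⟨c, hc, d, hd, e'⟩ := hq
        exact ⟨a + c, add_mem ha hc, b + d, add_mem hb hd, by rw [map_add, e, e']; ring⟩
      | mul_X p j hp =>
        rw [map_mul]
        refine hmul _ _ hp ?_
        fin_cases j
        · refine ⟨h * (x + y), mul_mem mh m1, h, mh, ?_⟩
          change Lx k = _
          rw [ex]
          linear_combination (-x) * h2
        · refine ⟨h * (x + y), mul_mem mh m1, -h, neg_mem mh, ?_⟩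
          change Ly k = _
          rw [ey]
          linear_combination (-y) * h2
    have hpow : ∀ n : ℕ, ∃ a ∈ A, ∃ b ∈ A, i ^ n = a + (x - y) * b := by
      intro n
      induction n with
      | zero => exact ⟨1, one_mem _, 0, zero_mem _, by ring⟩
      | succ n ih =>
        rw [pow_succ]
        exact hmul _ _ ih ⟨0, zero_mem _, i ^ 2, m3, by linear_combination (-i) * hdi⟩
    refine le_antisymm ?_ hle
    intro f hf
    change τ f = f at hf
    obtain ⟨n, p, hp⟩ := IsLocalization.Away.surj (X 0 - X 1 : MvPolynomial (Fin 2) k) f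
    have e1 : algebraMap (MvPolynomial (Fin 2) k) (Lring k) (X 0 - X 1) = x - y := by
      rw [map_sub, ← ex, ← ey]
    rw [e1] at hp
    have e2 : f = algebraMap (MvPolynomial (Fin 2) k) (Lring k) p * i ^ n := by
      rw [← hp, mul_assoc, ← mul_pow, hdi, one_pow, mul_one]
    obtain ⟨a, ha, b, hb, e⟩ := hmul _ _ (hpol p) (hpow n)
    rw [← e2] at e
    have ta : τ a = a := hle ha
    have tb : τ b = b := hle hb
    rw [e, map_add, map_mul, map_sub, hx, hy, ta, tb] at hf
    have : f = a := by
      linear_combination e - (x - y) * b * h2 - h * hf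
    rw [this]
    exact ha
  exact key _ _ _ rfl rfl rfl
end
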